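/- (Fundamental identity) Assume φ satisfies the LSCC property and 1/(16ε) ≥ B. If x ∈ X with V_ε(x) < ∞ and u_ε is a minimizer of I_ε over 𝒜_x^ε, then the map t ↦ V_ε(u_ε(t)) is absolutely continuous on [0,∞), and for a.e. t ∈ (0,∞): −d/dt V_ε(u_ε(t)) = (1/2)|u_ε'|²(t) + (1/ε)( φ(u_ε(t)) − V_ε(u_ε(t)) ) = (1/2)|u_ε'|²(t) + (1/2) G_ε²(u_ε(t)); moreover V_ε(u_ε(t)) = φ(u_ε(t)) − (ε/2)|u_ε'|²(t) for a.e. t ∈ (0,∞). -/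

import Mathlib

/-!
The proof rests on dynamic programming and on a first variation in time.

Along an admissible curve the negative part of the WED integrand is integrable: by coercivity it
is controlled by `d(u t, u 0)²`, whose weighted integral is bounded by that of `|u'|²` through a
weighted Hardy inequality (`hardy`, `neg_part_lt_top`). Hence `I_ε[u]` is an ordinary Lebesgue
integral as soon as it is not `⊤` (`WEDfun_eq`, `integrable_energy`).

Gluing `u` on `[0,t]` to an arbitrary competitor from `u t` shows that `u (t + ·)` is again a
minimizer (`veps_curve`). This gives the closed formula
`V_ε(u t) = e^{t/ε} (I_ε[u] - ∫₀ᵗ ((ε/2)|u'|² + φ(u)) dμ_ε)`, named `value`, which is a product of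
absolutely continuous functions, and differentiating it gives the first identity
(`hasDerivAt_value`, `ac_value`).

For the identity `V_ε(u) = φ(u) - (ε/2)|u'|²`, the arc of `u` on `[t,t₂]` is run through with the
parametrization accelerated by a factor `α > 0`, and `u` is followed unchanged afterwards. This
curve is a competitor from `u t`; its minimality inequality, after a change of variables, says that
`t ↦ ∫₀ᵗ scaledEnergy + e^{-t/(αε)} V_ε(u t)` is nondecreasing (`value_le_scaled`). Nonnegativity
of its derivative reads
`0 ≤ (α - 1) (α (ε/2)|u'|² - (φ(u) - V_ε(u)))` almost everywhere (`ae_scaled_ineq`), and letting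
`α → 1` along sequences from above and from below yields the two inequalities (`ae_value_eq`).
-/

open MeasureTheory Filter Topology Set ENNReal

noncomputable section

namespace WED

variable {X : Type*} [MetricSpace X]

/-- The exponential probability measure `μ_ε = ε⁻¹ e^{-t/ε} dt` on `(0,∞)`. -/
def expMeasure (ε : ℝ) : Measure ℝ :=
  (volume.restrict (Ioi (0:ℝ))).withDensity fun t => ENNReal.ofReal (ε⁻¹ * Real.exp (-t / ε))

/-- The positive part of an extended real, as an extended nonnegative real. -/
def epos (x : EReal) : ℝ≥0∞ := if x = ⊤ then ⊤ else ENNReal.ofReal x.toReal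

/-- The absolute value of an extended real, as an extended nonnegative real. -/
def eabs (x : EReal) : ℝ≥0∞ := epos x ⊔ epos (-x)

/-- The (extended-real valued) integral of an extended-real valued function, defined as the
difference between the integrals of the positive and of the negative part. -/
def eIntegral (μ : Measure ℝ) (f : ℝ → EReal) : EReal :=
  ((∫⁻ t, epos (f t) ∂μ : ℝ≥0∞) : EReal) - ((∫⁻ t, epos (-f t) ∂μ : ℝ≥0∞) : EReal)

/-- `m` is *the* metric derivative of the curve `u` on the set `I ⊆ ℝ`:  `m` is a nonnegative
locally integrable function, `d(u s, u t) ≤ ∫_s^t m` (so that `u` is absolutely continuous),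
and `m t` is the limit of the difference quotients `d(u s, u t)/|s-t|` at a.e. `t ∈ I`. -/
structure IsMetricDerivOn (u : ℝ → X) (m : ℝ → ℝ) (I : Set ℝ) : Prop where
  nonneg : ∀ t, 0 ≤ m t
  locInt : ∀ s ∈ I, ∀ t ∈ I, IntegrableOn m (Icc s t) volume
  dist_le : ∀ s ∈ I, ∀ t ∈ I, s ≤ t → dist (u s) (u t) ≤ ∫ r in Icc s t, m r
  limit : ∀ᵐ t ∂(volume.restrict I),
    Tendsto (fun s => dist (u s) (u t) / |s - t|) (𝓝[I \ {t}] t) (𝓝 (m t))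

/-- `u ∈ AC²_loc(I; X)`, with metric derivative `m`. -/
def AC2LocOn (u : ℝ → X) (m : ℝ → ℝ) (I : Set ℝ) : Prop :=
  IsMetricDerivOn u m I ∧ ∀ s ∈ I, ∀ t ∈ I, IntegrableOn (fun r => m r ^ 2) (Icc s t) volume

/-- `u ∈ AC²(I; X)`, with metric derivative `m`. -/
def AC2On (u : ℝ → X) (m : ℝ → ℝ) (I : Set ℝ) : Prop :=
  IsMetricDerivOn u m I ∧ IntegrableOn (fun r => m r ^ 2) I volume

/-- The integrand `(ε/2)|u'|²(t) + φ(u(t))` of the WED functional. -/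
def wedIntegrand (φ : X → EReal) (ε : ℝ) (u : ℝ → X) (m : ℝ → ℝ) (t : ℝ) : EReal :=
  ((ε / 2 * m t ^ 2 : ℝ) : EReal) + φ (u t)

/-- The WED functional `I_ε[u] = ∫₀^∞ ((ε/2)|u'|² + φ(u)) dμ_ε`. -/
def WEDfun (φ : X → EReal) (ε : ℝ) (u : ℝ → X) (m : ℝ → ℝ) : EReal :=
  eIntegral (expMeasure ε) (wedIntegrand φ ε u m)

/-- The admissible class `𝒜_x^ε`: curves `u ∈ AC²_loc([0,∞);X)` (with metric derivative `m`)
with `u 0 = x` and `∫₀^∞ |u'|² dμ_ε < ∞`. -/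
def Admissible (ε : ℝ) (x : X) (u : ℝ → X) (m : ℝ → ℝ) : Prop :=
  u 0 = x ∧ AC2LocOn u m (Ici 0) ∧
    (∫⁻ t, ENNReal.ofReal (m t ^ 2) ∂expMeasure ε) < ⊤

/-- The value function `V_ε(x) = inf { I_ε[u] : u ∈ 𝒜_x^ε }`. -/
def Veps (φ : X → EReal) (ε : ℝ) (x : X) : EReal :=
  ⨅ (p : {p : (ℝ → X) × (ℝ → ℝ) // Admissible ε x p.1 p.2}),
    WEDfun φ ε p.1.1 p.1.2

/-- `u` (with metric derivative `m`) minimizes the WED functional `I_ε` over `𝒜_x^ε`. -/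
def IsMinimizer (φ : X → EReal) (ε : ℝ) (x : X) (u : ℝ → X) (m : ℝ → ℝ) : Prop :=
  Admissible ε x u m ∧
    ∀ v n, Admissible ε x v n → WEDfun φ ε u m ≤ WEDfun φ ε v n

/-- The compatibility conditions (MT1), (MT2) between the distance `d` and the auxiliary
topology `σ`. -/
structure Compatible (σ : TopologicalSpace X) : Prop where
  mt1 : ∀ (u v : ℕ → X) (x y : X), Tendsto u atTop (@nhds X σ x) →
    Tendsto v atTop (@nhds X σ y) →
    ENNReal.ofReal (dist x y) ≤ Filter.liminf (fun n => ENNReal.ofReal (dist (u n) (v n))) atTop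
  mt2 : ∀ U : Set X, IsOpen[σ] U → ∀ x ∈ U, ∃ V : Set X, IsOpen[σ] V ∧ x ∈ V ∧
    ∃ δ : ℝ, 0 < δ ∧ ∀ y : X, Metric.infDist y V < δ → y ∈ U

/-- The standard lower semicontinuity–compactness–coercivity (LSCC) assumptions on a proper
functional `φ : X → (-∞,∞]`, with respect to the auxiliary topology `σ`. -/
structure LSCC (σ : TopologicalSpace X) (φ : X → EReal) (ustar : X) (A B : ℝ) : Prop where
  hA : 0 ≤ A
  hB : 0 ≤ B
  proper : ∃ x, φ x ≠ ⊤
  ne_bot : ∀ x, φ x ≠ ⊥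
  lsc : ∀ (u : ℕ → X) (x : X), (∃ C : ℝ, ∀ n k, dist (u n) (u k) ≤ C) →
    Tendsto u atTop (@nhds X σ x) → φ x ≤ Filter.liminf (fun n => φ (u n)) atTop
  cpt : ∀ u : ℕ → X, (∃ C : ℝ, ∀ n, φ (u n) ≤ (C : EReal)) →
    (∃ C : ℝ, ∀ n k, dist (u n) (u k) ≤ C) →
    ∃ (x : X) (j : ℕ → ℕ), StrictMono j ∧ Tendsto (u ∘ j) atTop (@nhds X σ x)
  coercive : ∀ u v : X, ((-(B * dist u v ^ 2 + (B * dist v ustar ^ 2 + A)) : ℝ) : EReal) ≤ φ u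

/-- The local (descending) slope `|∂φ|(x) = limsup_{v→x} (φ(x)-φ(v))⁺/d(x,v)`. -/
def slope (φ : X → EReal) (x : X) : ℝ≥0∞ :=
  Filter.limsup (fun v => epos (φ x - φ v) / ENNReal.ofReal (dist x v)) (𝓝[≠] x)

/-- The relaxed slope `|∂⁻φ|`: the σ-sequential lower semicontinuous envelope of the local
slope along `d`-bounded sequences with bounded energy. -/
def relaxedSlope (σ : TopologicalSpace X) (φ : X → EReal) (x : X) : ℝ≥0∞ :=
  ⨅ (u : ℕ → X) (_ : Tendsto u atTop (@nhds X σ x))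
    (_ : ∃ C : ℝ, ∀ n, dist (u n) x ≤ C ∧ φ (u n) ≤ (C : EReal)),
    Filter.liminf (fun n => slope φ (u n)) atTop

/-- `G_ε(x) = sqrt(2(φ(x) - V_ε(x))/ε)` if `V_ε(x) < ∞`, and `∞` otherwise. -/
def Geps (φ : X → EReal) (ε : ℝ) (x : X) : ℝ≥0∞ :=
  if Veps φ ε x = ⊤ then ⊤
  else (2 * epos (φ x - Veps φ ε x) / ENNReal.ofReal ε) ^ (1/2 : ℝ)

/-- The measure `|u'| dt` on `I` associated with the speed `m` of a curve. -/
def speedMeasure (m : ℝ → ℝ) (I : Set ℝ) : Measure ℝ :=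
  (volume.restrict I).withDensity fun t => ENNReal.ofReal (m t)

/-- Membership in `L^p(μ)`, `p ∈ [1,∞]`, for an `ℝ≥0∞`-valued function. -/
def MemLpENN (f : ℝ → ℝ≥0∞) (p : ℝ≥0∞) (μ : Measure ℝ) : Prop :=
  if p = ⊤ then ∃ C : ℝ≥0∞, C ≠ ⊤ ∧ ∀ᵐ t ∂μ, f t ≤ C
  else (∫⁻ t, f t ^ p.toReal ∂μ) < ⊤

/-- `g` is an `L^p`-moderated upper gradient for `φ`: for every absolutely continuous curve
`u` (with metric derivative `m`) on a compact interval such that `φ∘u ∈ L^p(|u'|dt)` and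
`g∘u ∈ L¹(|u'|dt)`, one has `|φ(u t) - φ(u s)| ≤ ∫_s^t g(u r) |u'|(r) dr`. -/
def IsModeratedUpperGradient (φ : X → EReal) (g : X → ℝ≥0∞) (p : ℝ≥0∞) : Prop :=
  ∀ (a b : ℝ), a ≤ b → ∀ (u : ℝ → X) (m : ℝ → ℝ), IsMetricDerivOn u m (Icc a b) →
    MemLpENN (fun t => eabs (φ (u t))) p (speedMeasure m (Icc a b)) →
    (∫⁻ t in Icc a b, g (u t) * ENNReal.ofReal (m t)) < ⊤ →
    ∀ s ∈ Icc a b, ∀ t ∈ Icc a b, s ≤ t →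
      (φ (u t) ≤ φ (u s) + ((∫⁻ r in Icc s t, g (u r) * ENNReal.ofReal (m r) : ℝ≥0∞) : EReal) ∧
       φ (u s) ≤ φ (u t) + ((∫⁻ r in Icc s t, g (u r) * ENNReal.ofReal (m r) : ℝ≥0∞) : EReal))

/-- A real function `f` is locally absolutely continuous on `[0,∞)` with density `g`. -/
def RealACLoc (f g : ℝ → ℝ) : Prop :=
  (∀ b : ℝ, 0 ≤ b → IntegrableOn g (Icc 0 b) volume) ∧
  ∀ t : ℝ, 0 ≤ t → f t = f 0 + ∫ r in Icc 0 t, g r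

/-- A real function `f` belongs to `AC²_loc([0,∞);ℝ)`, with derivative `g`. -/
def RealAC2Loc (f g : ℝ → ℝ) : Prop :=
  RealACLoc f g ∧ ∀ b : ℝ, 0 ≤ b → IntegrableOn (fun t => g t ^ 2) (Icc 0 b) volume

/-- The compact-open topology on curves `[0,∞) → X` induced by the auxiliary topology `σ`. -/
def compactOpenOf (σ : TopologicalSpace X) : TopologicalSpace (ℝ → X) :=
  TopologicalSpace.generateFrom
    {S | ∃ (K : Set ℝ) (U : Set X), K ⊆ Ici 0 ∧ IsCompact K ∧ IsOpen[σ] U ∧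
      S = {f : ℝ → X | MapsTo f K U}}

/-- The WED slope `|∂_w φ|(x) = limsup_{ε↓0} G_ε(x)`. -/
def wedSlope (φ : X → EReal) (x : X) : ℝ≥0∞ :=
  Filter.limsup (fun ε => Geps φ ε x) (𝓝[>] (0:ℝ))

/-- The relaxed WED slope `|∂_w^- φ|`. -/
def relaxedWedSlope (σ : TopologicalSpace X) (φ : X → EReal) (x : X) : ℝ≥0∞ :=
  ⨅ (u : ℕ → X) (_ : Tendsto u atTop (@nhds X σ x))
    (_ : ∃ C : ℝ, ∀ n, dist (u n) x ≤ C ∧ φ (u n) ≤ (C : EReal)),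
    Filter.liminf (fun n => wedSlope φ (u n)) atTop

/-- The φ-conditioned local slope `|∂̃ψ|(x) = limsup_{v→x, φ(v)→φ(x)} (ψ(x)-ψ(v))⁺/d(x,v)`. -/
def condSlope (φ ψ : X → EReal) (x : X) : ℝ≥0∞ :=
  Filter.limsup (fun v => epos (ψ x - ψ v) / ENNReal.ofReal (dist x v))
    ((𝓝[≠] x) ⊓ Filter.comap φ (𝓝 (φ x)))

/-- `φ` is geodesically `λ`-convex: every pair of points of `D(φ)` is joined by a
constant-speed geodesic along which `φ` is `λ`-convex. -/
def GeodesicLambdaConvex (φ : X → EReal) (lam : ℝ) : Prop :=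
  ∀ v₀ v₁ : X, φ v₀ ≠ ⊤ → φ v₁ ≠ ⊤ → ∃ γ : ℝ → X, γ 0 = v₀ ∧ γ 1 = v₁ ∧
    (∀ s ∈ Icc (0:ℝ) 1, ∀ t ∈ Icc (0:ℝ) 1, dist (γ s) (γ t) = |t - s| * dist v₀ v₁) ∧
    ∀ t ∈ Icc (0:ℝ) 1, φ (γ t) ≤ ((1 - t : ℝ) : EReal) * φ v₀ + ((t : ℝ) : EReal) * φ v₁ -
      ((lam / 2 * t * (1 - t) * dist v₀ v₁ ^ 2 : ℝ) : EReal)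

end WED
namespace WED

/-! ### Reparametrized and concatenated curves -/

/-- The function following `f` up to time `T` and then `g`, restarted at time `T`. -/
def ccat {α : Type*} (T : ℝ) (f g : ℝ → α) (s : ℝ) : α := if s ≤ T then f s else g (s - T)

lemma ccat_of_le {α : Type*} {T s : ℝ} (f g : ℝ → α) (h : s ≤ T) : ccat T f g s = f s :=
  if_pos h

lemma ccat_of_lt {α : Type*} {T s : ℝ} (f g : ℝ → α) (h : T < s) : ccat T f g s = g (s - T) :=
  if_neg (not_le.2 h)

/-- `AC²_loc([0,∞))` in terms of interval integrals and of unrestricted punctured neighbourhoods,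
the form in which reparametrization and concatenation are convenient. -/
lemma ac2LocOn_iff {X : Type*} [MetricSpace X] (u : ℝ → X) (m : ℝ → ℝ) :
    AC2LocOn u m (Ici 0) ↔ (∀ t, 0 ≤ m t) ∧ (∀ b, 0 ≤ b → IntervalIntegrable m volume 0 b) ∧
      (∀ b, 0 ≤ b → IntervalIntegrable (fun r => m r ^ 2) volume 0 b) ∧
      (∀ s t, 0 ≤ s → s ≤ t → dist (u s) (u t) ≤ ∫ r in s..t, m r) ∧
      ∀ᵐ t, 0 < t → Tendsto (fun s => dist (u s) (u t) / |s - t|) (𝓝[≠] t) (𝓝 (m t)) := by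
  have key : ∀ f : ℝ → ℝ, (∀ s ∈ Ici (0:ℝ), ∀ t ∈ Ici (0:ℝ), IntegrableOn f (Icc s t) volume) ↔
      ∀ b, 0 ≤ b → IntervalIntegrable f volume 0 b := by
    intro f
    constructor
    · intro h b hb
      exact (intervalIntegrable_iff_integrableOn_Icc_of_le hb).2 (h 0 (by simp) b hb)
    · intro h s hs t ht
      exact ((intervalIntegrable_iff_integrableOn_Icc_of_le ht).1 (h t ht)).mono_set
        (Icc_subset_Icc_left hs)
  have hnh : ∀ t : ℝ, 0 < t → 𝓝[Ici 0 \ {t}] t = 𝓝[≠] t := by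
    intro t ht
    rw [sdiff_eq, inter_comm]
    exact nhdsWithin_inter_of_mem' (mem_nhdsWithin_of_mem_nhds (Ici_mem_nhds ht))
  have hlim : (∀ᵐ t ∂(volume.restrict (Ici (0:ℝ))),
      Tendsto (fun s => dist (u s) (u t) / |s - t|) (𝓝[Ici 0 \ {t}] t) (𝓝 (m t))) ↔
      ∀ᵐ t, 0 < t → Tendsto (fun s => dist (u s) (u t) / |s - t|) (𝓝[≠] t) (𝓝 (m t)) := by
    rw [← restrict_Ioi_eq_restrict_Ici, ae_restrict_iff' measurableSet_Ioi]
    refine eventually_congr (Eventually.of_forall fun t => ?_)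
    refine forall_congr' fun ht => ?_
    rw [hnh t ht]
  constructor
  · rintro ⟨h, h2⟩
    refine ⟨h.nonneg, (key m).1 h.locInt, (key _).1 h2, ?_, hlim.1 h.limit⟩
    intro s t hs hst
    rw [intervalIntegral.integral_of_le hst, ← integral_Icc_eq_integral_Ioc]
    exact h.dist_le s hs t (hs.trans hst) hst
  · rintro ⟨h0, h1, h2, h3, h4⟩
    refine ⟨⟨h0, (key m).2 h1, ?_, hlim.2 h4⟩, (key _).2 h2⟩
    intro s hs t ht hst
    rw [integral_Icc_eq_integral_Ioc, ← intervalIntegral.integral_of_le hst]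
    exact h3 s t hs hst

lemma ii_affine {f : ℝ → ℝ} (hf : ∀ b, 0 ≤ b → IntervalIntegrable f volume 0 b) {a c : ℝ}
    (ha : 0 ≤ a) (hc : 0 < c) (b : ℝ) (hb : 0 ≤ b) :
    IntervalIntegrable (fun s => f (a + c * s)) volume 0 b := by
  have h1 : IntervalIntegrable f volume a (a + c * b) :=
    (hf a ha).symm.trans (hf _ (by positivity))
  have h2 := (h1.comp_add_left a).comp_mul_left (c := c)
  simpa [hc.ne'] using h2

lemma ae_affine {p : ℝ → Prop} (h : ∀ᵐ t : ℝ, 0 < t → p t) {a c : ℝ} (ha : 0 ≤ a)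
    (hc : 0 < c) : ∀ᵐ s : ℝ, 0 < s → p (a + c * s) := by
  have h1 : Measure.QuasiMeasurePreserving (fun s : ℝ => a + c * s) volume volume :=
    (measurePreserving_add_left volume a).quasiMeasurePreserving.comp
      (Measure.quasiMeasurePreserving_smul (volume : Measure ℝ) hc.ne')
  filter_upwards [h1.ae h] with s hs hs0
  exact hs (by positivity)

lemma ac2_affine {X : Type*} [MetricSpace X] {u : ℝ → X} {m : ℝ → ℝ}
    (h : AC2LocOn u m (Ici 0)) {a c : ℝ} (ha : 0 ≤ a) (hc : 0 < c) :
    AC2LocOn (fun s => u (a + c * s)) (fun s => c * m (a + c * s)) (Ici 0) := by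
  rw [ac2LocOn_iff] at h ⊢
  obtain ⟨h0, h1, h2, h3, h4⟩ := h
  refine ⟨fun t => mul_nonneg hc.le (h0 _), fun b hb => (ii_affine h1 ha hc b hb).const_mul c,
    fun b hb => ?_, fun s t hs hst => ?_, ?_⟩
  · simp only [mul_pow]
    exact (ii_affine h2 ha hc b hb).const_mul (c ^ 2)
  · refine (h3 (a + c * s) (a + c * t) (by positivity) (by gcongr)).trans (le_of_eq ?_)
    rw [intervalIntegral.integral_const_mul, intervalIntegral.integral_comp_add_mul m hc.ne' a,
      smul_eq_mul, mul_inv_cancel_left₀ hc.ne']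
  · filter_upwards [ae_affine h4 ha hc] with t ht ht0
    have h5 : Tendsto (fun s => a + c * s) (𝓝[≠] t) (𝓝[≠] (a + c * t)) := by
      refine tendsto_nhdsWithin_iff.2 ⟨?_, ?_⟩
      · exact (Continuous.tendsto (by fun_prop) t).mono_left nhdsWithin_le_nhds
      · filter_upwards [self_mem_nhdsWithin] with s hs
        intro he
        exact hs (by simpa [hc.ne'] using he)
    refine (((ht ht0).comp h5).const_mul c).congr' ?_
    filter_upwards [self_mem_nhdsWithin] with s hs
    have hst : |s - t| ≠ 0 := abs_ne_zero.2 (sub_ne_zero.2 hs)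
    have : |a + c * s - (a + c * t)| = c * |s - t| := by
      rw [show a + c * s - (a + c * t) = c * (s - t) by ring, abs_mul, abs_of_pos hc]
    simp only [Function.comp, this]
    field_simp

lemma integral_ccat_left {T a b : ℝ} (f g : ℝ → ℝ) (hab : a ≤ b) (hb : b ≤ T) :
    ∫ r in a..b, ccat T f g r = ∫ r in a..b, f r := by
  refine intervalIntegral.integral_congr fun r hr => ?_
  rw [uIcc_of_le hab] at hr
  exact ccat_of_le f g (hr.2.trans hb)

lemma integral_ccat_right {T a b : ℝ} (f g : ℝ → ℝ) (hab : a ≤ b) (ha : T ≤ a) :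
    ∫ r in a..b, ccat T f g r = ∫ r in (a - T)..(b - T), g r := by
  rw [← intervalIntegral.integral_comp_sub_right]
  refine intervalIntegral.integral_congr_ae (Eventually.of_forall fun r hr => ?_)
  rw [uIoc_of_le hab] at hr
  exact ccat_of_lt f g (ha.trans_lt hr.1)

lemma ii_ccat {f g : ℝ → ℝ} {T : ℝ} (hT : 0 ≤ T)
    (hf : ∀ b, 0 ≤ b → IntervalIntegrable f volume 0 b)
    (hg : ∀ b, 0 ≤ b → IntervalIntegrable g volume 0 b) (b : ℝ) (hb : 0 ≤ b) :
    IntervalIntegrable (ccat T f g) volume 0 b := by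
  have h1 : ∀ b, 0 ≤ b → b ≤ T → IntervalIntegrable (ccat T f g) volume 0 b := by
    intro b hb hbT
    refine (hf b hb).congr fun r hr => ?_
    rw [uIoc_of_le hb] at hr
    exact (ccat_of_le f g (hr.2.trans hbT)).symm
  rcases le_total b T with hbT | hbT
  · exact h1 b hb hbT
  · refine (h1 T hT le_rfl).trans ?_
    have := (hg (b - T) (by linarith)).comp_sub_right T
    rw [zero_add, sub_add_cancel] at this
    refine this.congr fun r hr => ?_
    rw [uIoc_of_le hbT] at hr
    exact (ccat_of_lt f g hr.1).symm

lemma ac2_ccat {X : Type*} [MetricSpace X] {u v : ℝ → X} {m n : ℝ → ℝ}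
    (hu : AC2LocOn u m (Ici 0)) (hv : AC2LocOn v n (Ici 0)) {T : ℝ} (hT : 0 ≤ T)
    (huv : v 0 = u T) : AC2LocOn (ccat T u v) (ccat T m n) (Ici 0) := by
  rw [ac2LocOn_iff] at hu hv ⊢
  obtain ⟨h0, h1, h2, h3, h4⟩ := hu
  obtain ⟨k0, k1, k2, k3, k4⟩ := hv
  have hsq : (fun r => ccat T m n r ^ 2) = ccat T (fun r => m r ^ 2) (fun r => n r ^ 2) := by
    funext r
    simp only [ccat]
    split_ifs <;> rfl
  have hii := ii_ccat hT h1 k1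
  have hright : ∀ s, T ≤ s → ccat T u v s = v (s - T) := by
    intro s hs
    rcases hs.eq_or_lt with rfl | hs
    · rw [ccat_of_le u v le_rfl, sub_self, huv]
    · exact ccat_of_lt u v hs
  have dL : ∀ s t, 0 ≤ s → s ≤ t → t ≤ T →
      dist (ccat T u v s) (ccat T u v t) ≤ ∫ r in s..t, ccat T m n r := by
    intro s t hs hst ht
    rw [integral_ccat_left m n hst ht, ccat_of_le u v (hst.trans ht), ccat_of_le u v ht]
    exact h3 s t hs hst
  have dR : ∀ s t, T ≤ s → s ≤ t →
      dist (ccat T u v s) (ccat T u v t) ≤ ∫ r in s..t, ccat T m n r := by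
    intro s t hs hst
    rw [integral_ccat_right m n hst hs, hright s hs, hright t (hs.trans hst)]
    exact k3 _ _ (by linarith) (by linarith)
  refine ⟨?_, hii, ?_, ?_, ?_⟩
  · intro t
    simp only [ccat]
    split_ifs
    exacts [h0 _, k0 _]
  · rw [hsq]
    exact ii_ccat hT h2 k2
  · intro s t hs hst
    rcases le_total t T with htT | htT
    · exact dL s t hs hst htT
    rcases le_total s T with hsT | hsT
    · refine (dist_triangle _ (ccat T u v T) _).trans ?_
      rw [← intervalIntegral.integral_add_adjacent_intervals
        ((hii s hs).symm.trans (hii T hT)) ((hii T hT).symm.trans (hii t (hs.trans hst)))]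
      exact add_le_add (dL s T hs hsT le_rfl) (dR T t le_rfl htT)
    · exact dR s t hsT hst
  · have hne : ∀ᵐ t : ℝ, t ≠ T := by simp [ae_iff]
    have k4' : ∀ᵐ t : ℝ, 0 < t - T →
        Tendsto (fun s => dist (v s) (v (t - T)) / |s - (t - T)|) (𝓝[≠] (t - T))
          (𝓝 (n (t - T))) :=
      (measurePreserving_sub_right volume T).quasiMeasurePreserving.ae k4
    filter_upwards [h4, k4', hne] with t ht kt htT ht0
    rcases lt_or_gt_of_ne htT with hlt | hgt
    · rw [ccat_of_le m n hlt.le]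
      refine (ht ht0).congr' ?_
      filter_upwards [mem_nhdsWithin_of_mem_nhds (Iio_mem_nhds hlt)] with s hs
      rw [ccat_of_le u v hlt.le, ccat_of_le u v (le_of_lt hs)]
    · rw [ccat_of_lt m n hgt]
      have h5 : Tendsto (fun s => s - T) (𝓝[≠] t) (𝓝[≠] (t - T)) := by
        refine tendsto_nhdsWithin_iff.2 ⟨?_, ?_⟩
        · exact (Continuous.tendsto (by fun_prop) t).mono_left nhdsWithin_le_nhds
        · filter_upwards [self_mem_nhdsWithin] with s hs
          intro he
          exact hs (by simpa using he)
      refine ((kt (by linarith)).comp h5).congr' ?_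
      filter_upwards [mem_nhdsWithin_of_mem_nhds (Ioi_mem_nhds hgt)] with s hs
      simp only [Function.comp]
      rw [ccat_of_lt u v hgt, ccat_of_lt u v hs, sub_sub_sub_cancel_right]

/-! ### Integration against the exponential measure -/

/-- The density of `expMeasure ε` with respect to Lebesgue measure on `(0,∞)`. -/
def wt (ε t : ℝ) : ℝ := ε⁻¹ * Real.exp (-t / ε)

lemma wt_pos {ε : ℝ} (hε : 0 < ε) (t : ℝ) : 0 < wt ε t := by
  unfold wt
  positivity

lemma continuous_wt (ε : ℝ) : Continuous (wt ε) := by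
  unfold wt
  fun_prop

lemma wt_add (ε s t : ℝ) : wt ε (s + t) = Real.exp (-s / ε) * wt ε t := by
  unfold wt
  rw [neg_add, add_div, Real.exp_add]
  ring

lemma expMeasure_eq (ε : ℝ) : expMeasure ε =
    (volume.restrict (Ioi (0:ℝ))).withDensity fun t => ENNReal.ofReal (wt ε t) := rfl

lemma measurable_wt (ε : ℝ) : Measurable fun t => ENNReal.ofReal (wt ε t) :=
  (continuous_wt ε).measurable.ennreal_ofReal

lemma integrable_exp_iff {ε : ℝ} (hε : 0 < ε) (f : ℝ → ℝ) :
    Integrable f (expMeasure ε) ↔ IntegrableOn (fun t => wt ε t * f t) (Ioi 0) := by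
  rw [expMeasure_eq, integrable_withDensity_iff_integrable_smul' (measurable_wt ε)
    (Eventually.of_forall fun _ => ENNReal.ofReal_lt_top)]
  simp only [ENNReal.toReal_ofReal (wt_pos hε _).le, smul_eq_mul, IntegrableOn]

lemma integral_exp_eq {ε : ℝ} (hε : 0 < ε) (f : ℝ → ℝ) :
    ∫ t, f t ∂expMeasure ε = ∫ t in Ioi 0, wt ε t * f t := by
  rw [expMeasure_eq, integral_withDensity_eq_integral_toReal_smul (measurable_wt ε)
    (Eventually.of_forall fun _ => ENNReal.ofReal_lt_top)]
  simp only [ENNReal.toReal_ofReal (wt_pos hε _).le, smul_eq_mul]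

lemma lintegral_exp_eq (ε : ℝ) (f : ℝ → ℝ≥0∞) :
    ∫⁻ t, f t ∂expMeasure ε = ∫⁻ t in Ioi 0, ENNReal.ofReal (wt ε t) * f t := by
  rw [expMeasure_eq, lintegral_withDensity_eq_lintegral_mul_non_measurable _ (measurable_wt ε)
    (Eventually.of_forall fun _ => ENNReal.ofReal_lt_top)]
  rfl

lemma ae_exp_iff {ε : ℝ} (hε : 0 < ε) (p : ℝ → Prop) :
    (∀ᵐ t ∂expMeasure ε, p t) ↔ ∀ᵐ t ∂volume.restrict (Ioi (0:ℝ)), p t := by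
  rw [expMeasure_eq, ae_withDensity_iff (measurable_wt ε)]
  simp [wt_pos hε]

lemma aemeasurable_exp {β : Type*} [MeasurableSpace β] {ε : ℝ} {f : ℝ → β}
    (h : AEMeasurable f (volume.restrict (Ioi (0:ℝ)))) : AEMeasurable f (expMeasure ε) :=
  h.mono_ac (withDensity_absolutelyContinuous _ _)

lemma lintegral_exp_const {ε : ℝ} (hε : 0 < ε) {C : ℝ≥0∞} (hC : C ≠ ⊤) :
    ∫⁻ _, C ∂expMeasure ε < ⊤ := by
  rw [lintegral_exp_eq, lintegral_mul_const _ (measurable_wt ε)]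
  refine ENNReal.mul_lt_top ?_ hC.lt_top
  have h1 : IntegrableOn (wt ε) (Ioi 0) := by
    have := (integrableOn_exp_mul_Ioi (a := -ε⁻¹) (by simpa using hε) 0).const_mul ε⁻¹
    refine this.congr (Eventually.of_forall fun t => ?_)
    simp only [wt]
    congr 2
    ring
  exact (hasFiniteIntegral_iff_ofReal (Eventually.of_forall fun t => (wt_pos hε t).le)).1 h1.2

/-- Restarting at time `T` preserves weighted integrability and rescales the weighted tail by
`e^{-T/ε}`. -/
lemma weighted_shift {ε T : ℝ} (f : ℝ → ℝ)
    (hf : IntegrableOn (fun t => wt ε t * f t) (Ioi T)) :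
    IntegrableOn (fun t => wt ε t * f (T + t)) (Ioi 0) ∧
    ∫ t in Ioi T, wt ε t * f t
      = Real.exp (-T / ε) * ∫ t in Ioi 0, wt ε t * f (T + t) := by
  have hmp := measurePreserving_add_left (volume : Measure ℝ) T
  have hemb : MeasurableEmbedding fun x : ℝ => T + x := measurableEmbedding_addLeft T
  have hpre : (fun x : ℝ => T + x) ⁻¹' Ioi T = Ioi 0 := by ext; simp
  have heq : ∀ t, wt ε (T + t) * f (T + t) = Real.exp (-T / ε) * (wt ε t * f (T + t)) := by
    intro t
    rw [wt_add, mul_assoc]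
  constructor
  · have h1 := (hmp.integrableOn_comp_preimage hemb).2 hf
    rw [hpre] at h1
    have h2 := h1.const_mul (Real.exp (-T / ε))⁻¹
    refine h2.congr (Eventually.of_forall fun t => ?_)
    simp only [Function.comp, heq]
    rw [inv_mul_cancel_left₀ (Real.exp_pos _).ne']
  · rw [← hmp.setIntegral_preimage_emb hemb, hpre, ← integral_const_mul]
    simp only [heq]

lemma weighted_ccat {ε T : ℝ} (hT : 0 ≤ T) {f g : ℝ → ℝ}
    (hf : ∀ b, 0 ≤ b → IntervalIntegrable f volume 0 b)
    (hg : IntegrableOn (fun t => wt ε t * g t) (Ioi 0)) :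
    IntegrableOn (fun t => wt ε t * ccat T f g t) (Ioi 0) ∧
    ∫ t in Ioi 0, wt ε t * ccat T f g t
      = (∫ t in (0:ℝ)..T, wt ε t * f t) + Real.exp (-T / ε) * ∫ t in Ioi 0, wt ε t * g t := by
  have hL : IntegrableOn (fun t => wt ε t * ccat T f g t) (Ioc 0 T) := by
    rw [← intervalIntegrable_iff_integrableOn_Ioc_of_le hT]
    refine ((hf T hT).continuousOn_mul (continuous_wt ε).continuousOn).congr fun r hr => ?_
    rw [uIoc_of_le hT] at hr
    simp only [ccat_of_le f g hr.2]
  have hR : IntegrableOn (fun t => wt ε t * ccat T f g t) (Ioi T) := by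
    have hmp := measurePreserving_sub_right (volume : Measure ℝ) T
    have hemb : MeasurableEmbedding fun x : ℝ => x - T := by
      simpa [sub_eq_add_neg] using measurableEmbedding_addRight (-T)
    have hpre : (fun x : ℝ => x - T) ⁻¹' Ioi 0 = Ioi T := by ext; simp
    have h1 := (hmp.integrableOn_comp_preimage hemb).2 hg
    rw [hpre] at h1
    refine IntegrableOn.congr_fun (h1.const_mul (Real.exp (-T / ε))) (fun t ht => ?_)
      measurableSet_Ioi
    simp only [Function.comp, ccat_of_lt f g ht]
    rw [← mul_assoc, ← wt_add, add_sub_cancel]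
  have hun : Ioi (0:ℝ) = Ioc 0 T ∪ Ioi T := (Ioc_union_Ioi_eq_Ioi hT).symm
  refine ⟨by rw [hun]; exact hL.union hR, ?_⟩
  rw [hun, setIntegral_union (Ioc_disjoint_Ioi le_rfl) measurableSet_Ioi hL hR, ← hun]
  congr 1
  · rw [intervalIntegral.integral_of_le hT]
    refine setIntegral_congr_fun measurableSet_Ioc fun t ht => ?_
    simp only [ccat_of_le f g ht.2]
  · rw [(weighted_shift _ hR).2]
    congr 1
    refine setIntegral_congr_fun measurableSet_Ioi fun t ht => ?_
    have : T < T + t := by simpa using ht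
    simp only [ccat_of_lt f g this, add_sub_cancel_left]

lemma ii_of_weighted {ε : ℝ} (hε : 0 < ε) {f : ℝ → ℝ}
    (hf : IntegrableOn (fun t => wt ε t * f t) (Ioi 0)) (b : ℝ) (hb : 0 ≤ b) :
    IntervalIntegrable f volume 0 b := by
  have h1 : IntervalIntegrable (fun t => wt ε t * f t) volume 0 b :=
    (intervalIntegrable_iff_integrableOn_Ioc_of_le hb).2 (hf.mono_set Ioc_subset_Ioi_self)
  have hc : Continuous fun t => (wt ε t)⁻¹ :=
    (continuous_wt ε).inv₀ fun t => (wt_pos hε t).ne'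
  refine (h1.continuousOn_mul hc.continuousOn).congr fun t _ => ?_
  rw [inv_mul_cancel_left₀ (wt_pos hε t).ne']

/-! ### The extended-real integral -/

lemma epos_of_ne_top {x : EReal} (h : x ≠ ⊤) : epos x = ENNReal.ofReal x.toReal := if_neg h

lemma measurable_epos : Measurable epos := by
  unfold epos
  exact Measurable.ite (measurableSet_singleton _) measurable_const
    measurable_ereal_toReal.ennreal_ofReal

lemma eIntegral_eq_integral {μ : Measure ℝ} {f : ℝ → EReal} (hbot : ∀ t, f t ≠ ⊥)
    (htop : ∀ᵐ t ∂μ, f t ≠ ⊤) (hint : Integrable (fun t => (f t).toReal) μ) :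
    eIntegral μ f = ((∫ t, (f t).toReal ∂μ : ℝ) : EReal) := by
  have h1 : ∫⁻ t, epos (f t) ∂μ = ∫⁻ t, ENNReal.ofReal (f t).toReal ∂μ := by
    refine lintegral_congr_ae ?_
    filter_upwards [htop] with t ht
    exact epos_of_ne_top ht
  have h2 : ∫⁻ t, epos (-f t) ∂μ = ∫⁻ t, ENNReal.ofReal (-(f t).toReal) ∂μ := by
    refine lintegral_congr fun t => ?_
    rw [epos_of_ne_top (by simpa using hbot t), EReal.toReal_neg_eq]
  have f1 : ∫⁻ t, ENNReal.ofReal (f t).toReal ∂μ ≠ ⊤ := hint.lintegral_lt_top.ne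
  have f2 : ∫⁻ t, ENNReal.ofReal (-(f t).toReal) ∂μ ≠ ⊤ := hint.neg.lintegral_lt_top.ne
  rw [eIntegral, h1, h2, integral_eq_lintegral_pos_part_sub_lintegral_neg_part hint,
    EReal.coe_sub, EReal.coe_ennreal_toReal f1, EReal.coe_ennreal_toReal f2]

lemma integrable_of_eIntegral_ne_top {μ : Measure ℝ} {f : ℝ → EReal} (hbot : ∀ t, f t ≠ ⊥)
    (hm : AEMeasurable f μ) (hneg : ∫⁻ t, epos (-f t) ∂μ < ⊤) (h : eIntegral μ f ≠ ⊤) :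
    (∀ᵐ t ∂μ, f t ≠ ⊤) ∧ Integrable (fun t => (f t).toReal) μ := by
  have hpos : ∫⁻ t, epos (f t) ∂μ ≠ ⊤ := by
    intro hp
    apply h
    rw [eIntegral, hp, ← EReal.coe_ennreal_toReal hneg.ne, EReal.coe_ennreal_top,
      EReal.top_sub_coe]
  have htop : ∀ᵐ t ∂μ, f t ≠ ⊤ := by
    filter_upwards [ae_lt_top' (measurable_epos.comp_aemeasurable hm) hpos] with t ht he
    simp [he, epos] at ht
  refine ⟨htop, measurable_ereal_toReal.comp_aemeasurable hm |>.aestronglyMeasurable, ?_⟩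
  rw [hasFiniteIntegral_iff_enorm]
  refine lt_of_le_of_lt (lintegral_mono_ae (g := fun t => epos (f t) + epos (-f t)) ?_) ?_
  · filter_upwards [htop] with t ht
    rw [epos_of_ne_top ht, epos_of_ne_top (by simpa using hbot t), EReal.toReal_neg_eq,
      Real.enorm_eq_ofReal_abs]
    rcases abs_cases (f t).toReal with ⟨h, _⟩ | ⟨h, _⟩ <;> rw [h]
    exacts [le_self_add, le_add_self]
  · have hm1 : AEMeasurable (fun t => epos (f t)) μ := measurable_epos.comp_aemeasurable hm
    rw [lintegral_add_left' hm1]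
    exact ENNReal.add_lt_top.2 ⟨hpos.lt_top, hneg⟩

/-! ### A weighted Hardy inequality -/

lemma lintegral_exp_Iic {a : ℝ} (ha : 0 < a) (t : ℝ) :
    ∫⁻ r in Iic t, ENNReal.ofReal (Real.exp (a * r)) = ENNReal.ofReal (Real.exp (a * t) / a) := by
  rw [← integral_exp_mul_Iic ha, ofReal_integral_eq_lintegral_ofReal (integrableOn_exp_mul_Iic ha t)
    (Eventually.of_forall fun _ => (Real.exp_pos _).le)]

lemma lintegral_exp_Ici {a : ℝ} (ha : 0 < a) (t : ℝ) :
    ∫⁻ r in Ici t, ENNReal.ofReal (Real.exp (-a * r))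
      = ENNReal.ofReal (Real.exp (-a * t) / a) := by
  rw [← restrict_Ioi_eq_restrict_Ici, show Real.exp (-a * t) / a = -Real.exp (-a * t) / (-a) by
    rw [neg_div_neg_eq], ← integral_exp_mul_Ioi (by linarith : -a < 0),
    ofReal_integral_eq_lintegral_ofReal (integrableOn_exp_mul_Ioi (by linarith) t)
    (Eventually.of_forall fun _ => (Real.exp_pos _).le)]

/-- Cauchy–Schwarz with the splitting `1 = e^{-ar/2} e^{ar/2}`. -/
lemma sq_lintegral_le {p : ℝ → ℝ≥0∞} (hp : Measurable p) {a : ℝ} (ha : 0 < a) (t : ℝ) :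
    (∫⁻ r in Ioc 0 t, p r) ^ 2 ≤
      (∫⁻ r in Ioc 0 t, p r ^ 2 * ENNReal.ofReal (Real.exp (-a * r))) *
        ENNReal.ofReal (Real.exp (a * t) / a) := by
  have hm1 : Measurable fun r : ℝ => ENNReal.ofReal (Real.exp (-(a / 2) * r)) := by fun_prop
  have hm2 : Measurable fun r : ℝ => ENNReal.ofReal (Real.exp (a / 2 * r)) := by fun_prop
  have h := ENNReal.lintegral_mul_le_Lp_mul_Lq (volume.restrict (Ioc 0 t))
    Real.HolderConjugate.two_two (hp.mul hm1).aemeasurable hm2.aemeasurable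
  have e1 : ∀ r, ((p * fun r : ℝ => ENNReal.ofReal (Real.exp (-(a / 2) * r))) *
      fun r : ℝ => ENNReal.ofReal (Real.exp (a / 2 * r))) r = p r := by
    intro r
    simp only [Pi.mul_apply]
    rw [mul_assoc, ← ENNReal.ofReal_mul (Real.exp_pos _).le, ← Real.exp_add]
    simp
  have e2 : ∀ r, (p * fun r : ℝ => ENNReal.ofReal (Real.exp (-(a / 2) * r))) r ^ (2:ℝ)
      = p r ^ 2 * ENNReal.ofReal (Real.exp (-a * r)) := by
    intro r
    simp only [Pi.mul_apply]
    rw [ENNReal.rpow_two, mul_pow, ← ENNReal.ofReal_pow (Real.exp_pos _).le, ← Real.exp_nat_mul]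
    congr 3
    push_cast
    ring
  have e3 : ∀ r, ENNReal.ofReal (Real.exp (a / 2 * r)) ^ (2:ℝ)
      = ENNReal.ofReal (Real.exp (a * r)) := by
    intro r
    rw [ENNReal.rpow_two, ← ENNReal.ofReal_pow (Real.exp_pos _).le, ← Real.exp_nat_mul]
    congr 2
    push_cast
    ring
  simp only [e1, e2, e3] at h
  calc (∫⁻ r in Ioc 0 t, p r) ^ 2 ≤ _ := pow_le_pow_left₀ zero_le h 2
    _ = (∫⁻ r in Ioc 0 t, p r ^ 2 * ENNReal.ofReal (Real.exp (-a * r))) *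
        ∫⁻ r in Ioc 0 t, ENNReal.ofReal (Real.exp (a * r)) := by
      rw [mul_pow, ← ENNReal.rpow_two, ← ENNReal.rpow_two, ← ENNReal.rpow_mul,
        ← ENNReal.rpow_mul]
      norm_num
    _ ≤ _ := by
      gcongr
      rw [← lintegral_exp_Iic ha]
      exact lintegral_mono_set fun r hr => hr.2

/-- Hardy's inequality for the exponential weight; it makes `d(u(t),u(0))²` integrable for
`expMeasure ε` along admissible curves. -/
lemma hardy {ε : ℝ} (hε : 0 < ε) {p : ℝ → ℝ≥0∞} (hp : Measurable p) :
    ∫⁻ t in Ioi 0, ENNReal.ofReal (wt ε t) * (∫⁻ r in Ioc 0 t, p r) ^ 2 ≤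
      ENNReal.ofReal (4 * ε ^ 2) * ∫⁻ r in Ioi 0, ENNReal.ofReal (wt ε r) * p r ^ 2 := by
  set a : ℝ := (2 * ε)⁻¹ with ha_def
  have ha : 0 < a := by positivity
  have hwt : ∀ t, wt ε t = ε⁻¹ * (Real.exp (-a * t) * Real.exp (-a * t)) := by
    intro t
    rw [wt, ← Real.exp_add]
    congr 2
    rw [ha_def]
    field_simp
    ring
  -- the weighted Cauchy–Schwarz bound, written as a double integral over `0 < r ≤ t`
  let q : ℝ → ℝ → ℝ≥0∞ := fun t r => (Iic t).indicator (fun r =>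
    ENNReal.ofReal 2 * ENNReal.ofReal (Real.exp (-a * t)) *
      (p r ^ 2 * ENNReal.ofReal (Real.exp (-a * r)))) r
  have hq : Measurable (Function.uncurry q) := by
    have : Function.uncurry q = {z : ℝ × ℝ | z.2 ≤ z.1}.indicator (fun z =>
        ENNReal.ofReal 2 * ENNReal.ofReal (Real.exp (-a * z.1)) *
          (p z.2 ^ 2 * ENNReal.ofReal (Real.exp (-a * z.2)))) := by
      funext z
      simp only [Function.uncurry, q, indicator, mem_Iic]
      rfl
    rw [this]
    exact Measurable.indicator (by fun_prop) (measurableSet_le measurable_snd measurable_fst)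
  have hb : ∀ t, ENNReal.ofReal (wt ε t) * (∫⁻ r in Ioc 0 t, p r) ^ 2
      ≤ ∫⁻ r in Ioi 0, q t r := by
    intro t
    have e : ∫⁻ r in Ioi 0, q t r = ENNReal.ofReal 2 * ENNReal.ofReal (Real.exp (-a * t)) *
        ∫⁻ r in Ioc 0 t, p r ^ 2 * ENNReal.ofReal (Real.exp (-a * r)) := by
      simp only [q]
      rw [lintegral_indicator measurableSet_Iic, Measure.restrict_restrict measurableSet_Iic,
        lintegral_const_mul _ (by fun_prop), inter_comm, Ioi_inter_Iic]
    rw [e]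
    refine (mul_le_mul_right (sq_lintegral_le hp ha t) _).trans (le_of_eq ?_)
    rw [mul_comm (lintegral _ _), ← mul_assoc, ← ENNReal.ofReal_mul (wt_pos hε t).le,
      ← ENNReal.ofReal_mul zero_le_two]
    congr 2
    rw [hwt]
    have : Real.exp (-a * t) * Real.exp (a * t) = 1 := by
      rw [← Real.exp_add]
      simp
    calc _ = ε⁻¹ * Real.exp (-a * t) * (Real.exp (-a * t) * Real.exp (a * t)) / a := by ring
      _ = _ := by
        rw [this, ha_def]
        field_simp
  refine (lintegral_mono hb).trans ?_
  rw [lintegral_lintegral_swap hq.aemeasurable, ← lintegral_const_mul _ (by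
    have := measurable_wt ε
    fun_prop)]
  refine lintegral_mono fun r => ?_
  have e : ∀ t, q t r = (Ici r).indicator (fun t => ENNReal.ofReal 2 *
      (p r ^ 2 * ENNReal.ofReal (Real.exp (-a * r))) * ENNReal.ofReal (Real.exp (-a * t))) t := by
    intro t
    simp only [q, indicator, mem_Iic, mem_Ici]
    split_ifs
    · ring
    · rfl
  simp only [e]
  rw [lintegral_indicator measurableSet_Ici, Measure.restrict_restrict measurableSet_Ici]
  calc _ ≤ ∫⁻ t in Ici r, ENNReal.ofReal 2 *
      (p r ^ 2 * ENNReal.ofReal (Real.exp (-a * r))) * ENNReal.ofReal (Real.exp (-a * t)) :=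
        lintegral_mono_set inter_subset_left
    _ = p r ^ 2 * ENNReal.ofReal (4 * ε ^ 2 * wt ε r) := by
      rw [lintegral_const_mul _ (by fun_prop), lintegral_exp_Ici ha,
        show ENNReal.ofReal 2 * (p r ^ 2 * ENNReal.ofReal (Real.exp (-a * r))) *
          ENNReal.ofReal (Real.exp (-a * r) / a) = p r ^ 2 * (ENNReal.ofReal 2 *
            (ENNReal.ofReal (Real.exp (-a * r)) * ENNReal.ofReal (Real.exp (-a * r) / a))) by ring,
        ← ENNReal.ofReal_mul (Real.exp_pos _).le, ← ENNReal.ofReal_mul zero_le_two]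
      congr 2
      rw [hwt, ha_def]
      field_simp
      ring
    _ = _ := by
      rw [ENNReal.ofReal_mul (by positivity)]
      ring
    _ ≤ _ := le_rfl

/-! ### Energy of admissible curves -/

lemma ii_indicator {f : ℝ → ℝ} (hf : ∀ b, 0 ≤ b → IntervalIntegrable f volume 0 b) (a b : ℝ) :
    IntervalIntegrable ((Ioi 0).indicator f) volume a b := by
  have h : ∀ b, IntervalIntegrable ((Ioi 0).indicator f) volume 0 b := by
    intro b
    rcases le_total 0 b with hb | hb
    · refine (hf b hb).congr fun r hr => ?_
      rw [uIoc_of_le hb] at hr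
      rw [indicator_of_mem (show r ∈ Ioi 0 from hr.1)]
    · refine (intervalIntegrable_const (c := (0:ℝ))).congr fun r hr => ?_
      rw [uIoc_of_ge hb] at hr
      rw [indicator_of_notMem (by simpa using hr.2)]
  exact (h a).symm.trans (h b)

lemma integral_indicator_eq {f : ℝ → ℝ} {a b : ℝ} (ha : 0 ≤ a) (hab : a ≤ b) :
    ∫ r in a..b, (Ioi 0).indicator f r = ∫ r in a..b, f r := by
  refine intervalIntegral.integral_congr_ae (Eventually.of_forall fun r hr => ?_)
  rw [uIoc_of_le hab] at hr
  exact indicator_of_mem (show r ∈ Ioi 0 from ha.trans_lt hr.1) f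

lemma aemeasurable_of_ii {f : ℝ → ℝ} (hf : ∀ b, 0 ≤ b → IntervalIntegrable f volume 0 b) :
    AEMeasurable f (volume.restrict (Ioi (0:ℝ))) := by
  have hU : (⋃ n : ℕ, Ioc (0:ℝ) n) = Ioi 0 := by
    ext t
    simp only [mem_iUnion, mem_Ioc, mem_Ioi]
    constructor
    · rintro ⟨n, h, _⟩
      exact h
    · intro h
      obtain ⟨n, hn⟩ := exists_nat_ge t
      exact ⟨n, h, hn⟩
  rw [← hU, aemeasurable_iUnion_iff]
  intro n
  exact ((intervalIntegrable_iff_integrableOn_Ioc_of_le (Nat.cast_nonneg n)).1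
    (hf n (Nat.cast_nonneg n))).aestronglyMeasurable.aemeasurable

lemma admissible_iff {X : Type*} [MetricSpace X]
    {ε : ℝ} (hε : 0 < ε) (x : X) (u : ℝ → X) (m : ℝ → ℝ) :
    Admissible ε x u m ↔ u 0 = x ∧ AC2LocOn u m (Ici 0) ∧
      IntegrableOn (fun t => wt ε t * m t ^ 2) (Ioi 0) := by
  refine and_congr_right fun _ => and_congr_right fun hac => ?_
  rw [← integrable_exp_iff hε]
  have hm : AEStronglyMeasurable (fun t => m t ^ 2) (expMeasure ε) :=
    (aemeasurable_exp (aemeasurable_of_ii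
      ((ac2LocOn_iff u m).1 hac).2.2.1)).aestronglyMeasurable
  rw [← hasFiniteIntegral_iff_ofReal (Eventually.of_forall fun t => sq_nonneg (m t))]
  exact ⟨fun h => ⟨hm, h⟩, fun h => h.2⟩

lemma continuous_curve {X : Type*} [MetricSpace X]
    {u : ℝ → X} {m : ℝ → ℝ} (h : AC2LocOn u m (Ici 0)) :
    Continuous fun t => u (max t 0) := by
  obtain ⟨-, h1, -, h3, -⟩ := (ac2LocOn_iff u m).1 h
  set P : ℝ → ℝ := fun t => ∫ r in (0:ℝ)..t, (Ioi 0).indicator m r with hP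
  have hPc : Continuous P := intervalIntegral.continuous_primitive (ii_indicator h1) 0
  have hd : ∀ s t, 0 ≤ s → s ≤ t → dist (u s) (u t) ≤ P t - P s := by
    intro s t hs hst
    rw [hP, intervalIntegral.integral_interval_sub_left (ii_indicator h1 _ _)
      (ii_indicator h1 _ _), integral_indicator_eq hs hst]
    exact h3 s t hs hst
  have hd' : ∀ s t, dist (u (max s 0)) (u (max t 0)) ≤ |P (max s 0) - P (max t 0)| := by
    intro s t
    rcases le_total s t with hst | hst
    · refine (hd _ _ (le_max_right _ _) (max_le_max_right 0 hst)).trans ?_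
      rw [abs_sub_comm]
      exact le_abs_self _
    · rw [dist_comm]
      exact (hd _ _ (le_max_right _ _) (max_le_max_right 0 hst)).trans (le_abs_self _)
  have hQ : Continuous fun t => P (max t 0) := hPc.comp (by fun_prop)
  rw [continuous_iff_continuousAt]
  intro t
  refine tendsto_iff_dist_tendsto_zero.2 ?_
  refine squeeze_zero (fun _ => dist_nonneg) (fun s => hd' s t) ?_
  have : Continuous fun s => |P (max s 0) - P (max t 0)| := (hQ.sub continuous_const).abs
  simpa using this.tendsto t

/-- By (MT2) the metric topology is finer than `σ`. Metric convergence is spelled out with `dist`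
because `σ` would otherwise be picked up as the topology of `X`. -/
lemma le_liminf_of_LSCC {X : Type*} [MetricSpace X]
    {σ : TopologicalSpace X} (hcomp : Compatible σ) {φ : X → EReal}
    {ustar : X} {A B : ℝ} (hφ : LSCC σ φ ustar A B) (w : ℕ → X) (x : X)
    (hx : Tendsto (fun n => dist (w n) x) atTop (𝓝 (0 : ℝ))) :
    φ x ≤ Filter.liminf (fun n => φ (w n)) atTop := by
  have hσ : Tendsto w atTop (@nhds X σ x) := by
    intro S hS
    obtain ⟨U, hUS, hU, hxU⟩ := (@mem_nhds_iff X σ x S).1 hS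
    obtain ⟨V, -, hxV, δ, hδ, hy⟩ := hcomp.mt2 U hU x hxU
    have hlt : ∀ᶠ n in atTop, dist (w n) x < δ := hx.eventually_lt_const hδ
    change ∀ᶠ n in atTop, w n ∈ S
    filter_upwards [hlt] with n hn
    exact hUS (hy _ ((Metric.infDist_le_dist_of_mem hxV).trans_lt hn))
  have hb : ∃ C : ℝ, ∀ n k, dist (w n) (w k) ≤ C := by
    obtain ⟨C, hC⟩ := hx.bddAbove_range
    refine ⟨C + C, fun n k => (dist_triangle_right (w n) (w k) x).trans ?_⟩
    exact add_le_add (hC (mem_range_self n)) (hC (mem_range_self k))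
  exact hφ.lsc w x hb hσ

lemma lowerSemicontinuous_of_seq {X : Type*} [MetricSpace X]
    {φ : X → EReal}
    (h : ∀ (w : ℕ → X) (x : X), Tendsto (fun n => dist (w n) x) atTop (𝓝 (0 : ℝ)) →
      φ x ≤ Filter.liminf (fun n => φ (w n)) atTop) : LowerSemicontinuous φ := by
  rw [lowerSemicontinuous_iff_isClosed_preimage]
  intro y
  refine IsSeqClosed.isClosed fun w x hw hx => ?_
  exact (h w x (tendsto_iff_dist_tendsto_zero.1 hx)).trans
    (Filter.liminf_le_of_frequently_le' (Frequently.of_forall fun n => hw n))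

lemma aemeasurable_phi {X : Type*} [MetricSpace X]
    {φ : X → EReal}
    (hφ : ∀ (w : ℕ → X) (x : X), Tendsto (fun n => dist (w n) x) atTop (𝓝 (0 : ℝ)) →
      φ x ≤ Filter.liminf (fun n => φ (w n)) atTop)
    {u : ℝ → X} {m : ℝ → ℝ} (h : AC2LocOn u m (Ici 0)) :
    AEMeasurable (fun t => φ (u t)) (volume.restrict (Ioi (0:ℝ))) := by
  have h1 : Measurable (φ ∘ fun t => u (max t 0)) :=
    ((lowerSemicontinuous_of_seq hφ).comp (continuous_curve h)).measurable
  refine h1.aemeasurable.congr ?_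
  filter_upwards [ae_restrict_mem measurableSet_Ioi] with t ht
  rw [Function.comp, max_eq_left (le_of_lt (mem_Ioi.1 ht))]

lemma lintegral_dist_sq_lt_top {X : Type*} [MetricSpace X]
    {ε : ℝ} (hε : 0 < ε) {x : X} {u : ℝ → X} {m : ℝ → ℝ}
    (h : Admissible ε x u m) :
    ∫⁻ t, ENNReal.ofReal (dist (u t) (u 0)) ^ 2 ∂expMeasure ε < ⊤ := by
  obtain ⟨-, hac, hE⟩ := h
  obtain ⟨h0, h1, -, h3, -⟩ := (ac2LocOn_iff u m).1 hac
  have hmm := (aemeasurable_of_ii h1).ennreal_ofReal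
  set p := hmm.mk _ with hp_def
  have hp : Measurable p := hmm.measurable_mk
  have hae : ∀ᵐ r ∂volume.restrict (Ioi (0:ℝ)), ENNReal.ofReal (m r) = p r := hmm.ae_eq_mk
  have hbound : ∀ t ∈ Ioi (0:ℝ), ENNReal.ofReal (dist (u t) (u 0)) ≤ ∫⁻ r in Ioc 0 t, p r := by
    intro t ht
    have e : ∫⁻ r in Ioc 0 t, p r = ENNReal.ofReal (∫ r in (0:ℝ)..t, m r) := by
      rw [intervalIntegral.integral_of_le (le_of_lt ht), ofReal_integral_eq_lintegral_ofReal
        ((intervalIntegrable_iff_integrableOn_Ioc_of_le (le_of_lt ht)).1 (h1 t (le_of_lt ht)))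
        (Eventually.of_forall h0)]
      refine lintegral_congr_ae ?_
      filter_upwards [ae_restrict_of_ae_restrict_of_subset
        (Ioc_subset_Ioi_self : Ioc 0 t ⊆ Ioi 0) hae] with r hr using hr.symm
    rw [e, dist_comm]
    exact ENNReal.ofReal_le_ofReal (h3 0 t le_rfl (le_of_lt ht))
  rw [lintegral_exp_eq]
  refine lt_of_le_of_lt (setLIntegral_mono' measurableSet_Ioi fun t ht => ?_)
    (lt_of_le_of_lt (hardy hε hp) ?_)
  · gcongr
    exact hbound t ht
  · refine ENNReal.mul_lt_top ENNReal.ofReal_lt_top ?_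
    rw [lintegral_exp_eq] at hE
    refine lt_of_eq_of_lt (lintegral_congr_ae ?_) hE
    filter_upwards [hae] with r hr
    rw [← hr, ENNReal.ofReal_pow (h0 r)]

lemma wedIntegrand_ne_bot {X : Type*}
    {φ : X → EReal} (hbot : ∀ x, φ x ≠ ⊥) (ε : ℝ) (u : ℝ → X) (m : ℝ → ℝ)
    (t : ℝ) : wedIntegrand φ ε u m t ≠ ⊥ := by
  unfold wedIntegrand
  rw [Ne, EReal.add_eq_bot_iff, not_or]
  exact ⟨EReal.coe_ne_bot _, hbot _⟩

/-- Along admissible curves the negative part of the integrand is integrable, so that `WEDfun`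
takes the junk value `⊤ - ⊤` for none of them. -/
lemma neg_part_lt_top {X : Type*} [MetricSpace X]
    {σ : TopologicalSpace X} {φ : X → EReal} {ustar : X}
    {A B : ℝ} (hφ : LSCC σ φ ustar A B) {ε : ℝ} (hε : 0 < ε) {x : X} {u : ℝ → X} {m : ℝ → ℝ}
    (h : Admissible ε x u m) :
    ∫⁻ t, epos (-wedIntegrand φ ε u m t) ∂expMeasure ε < ⊤ := by
  have hb : ∀ t, epos (-wedIntegrand φ ε u m t) ≤
      ENNReal.ofReal B * ENNReal.ofReal (dist (u t) (u 0)) ^ 2 +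
        ENNReal.ofReal (B * dist (u 0) ustar ^ 2 + A) := by
    intro t
    rw [epos_of_ne_top (by simpa using wedIntegrand_ne_bot hφ.ne_bot ε u m t),
      ← ENNReal.ofReal_pow dist_nonneg, ← ENNReal.ofReal_mul hφ.hB,
      ← ENNReal.ofReal_add (mul_nonneg hφ.hB (sq_nonneg _))
        (add_nonneg (mul_nonneg hφ.hB (sq_nonneg _)) hφ.hA), EReal.toReal_neg_eq]
    refine ENNReal.ofReal_le_ofReal ?_
    have hc := hφ.coercive (u t) (u 0)
    have hA := hφ.hA
    have hB := hφ.hB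
    unfold wedIntegrand
    rcases eq_or_ne (φ (u t)) ⊤ with htop | htop
    · rw [htop, EReal.coe_add_top, EReal.toReal_top, neg_zero]
      positivity
    · lift φ (u t) to ℝ using ⟨htop, hφ.ne_bot _⟩ with y
      rw [← EReal.coe_add, EReal.toReal_coe]
      have hc' := EReal.coe_le_coe_iff.1 hc
      have : 0 ≤ ε / 2 * m t ^ 2 := by positivity
      linarith
  refine (lintegral_mono hb).trans_lt ?_
  rw [lintegral_add_right _ measurable_const, lintegral_const_mul' _ _ ENNReal.ofReal_ne_top]
  exact ENNReal.add_lt_top.2 ⟨ENNReal.mul_lt_top ENNReal.ofReal_lt_top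
    (lintegral_dist_sq_lt_top hε h), lintegral_exp_const hε ENNReal.ofReal_ne_top⟩

/-- The real-valued WED integrand. It agrees with `wedIntegrand` where `φ (u t)` is finite, which
is almost everywhere along curves of finite energy. -/
def energy {X : Type*}
    (φ : X → EReal) (ε : ℝ) (u : ℝ → X) (m : ℝ → ℝ) (t : ℝ) : ℝ :=
  ε / 2 * m t ^ 2 + (φ (u t)).toReal

lemma toReal_wedIntegrand {X : Type*}
    {φ : X → EReal} (hbot : ∀ x, φ x ≠ ⊥) (ε : ℝ) {u : ℝ → X} (m : ℝ → ℝ)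
    {t : ℝ} (h : φ (u t) ≠ ⊤) : (wedIntegrand φ ε u m t).toReal = energy φ ε u m t := by
  unfold wedIntegrand energy
  rw [EReal.toReal_add (EReal.coe_ne_top _) (EReal.coe_ne_bot _) h (hbot _), EReal.toReal_coe]

lemma WEDfun_eq {X : Type*}
    {φ : X → EReal} (hbot : ∀ x, φ x ≠ ⊥) {ε : ℝ} (hε : 0 < ε) {u : ℝ → X}
    {m : ℝ → ℝ} (htop : ∀ᵐ t, 0 < t → φ (u t) ≠ ⊤)
    (hint : IntegrableOn (fun t => wt ε t * energy φ ε u m t) (Ioi 0)) :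
    WEDfun φ ε u m = ((∫ t in Ioi 0, wt ε t * energy φ ε u m t : ℝ) : EReal) := by
  have htop' : ∀ᵐ t ∂expMeasure ε, φ (u t) ≠ ⊤ :=
    (ae_exp_iff hε _).2 ((ae_restrict_iff' measurableSet_Ioi).2 htop)
  have hcongr : ∀ᵐ t ∂expMeasure ε, energy φ ε u m t = (wedIntegrand φ ε u m t).toReal := by
    filter_upwards [htop'] with t ht using (toReal_wedIntegrand hbot ε m ht).symm
  rw [WEDfun, eIntegral_eq_integral (wedIntegrand_ne_bot hbot ε u m), ← integral_exp_eq hε,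
    integral_congr_ae hcongr]
  · filter_upwards [htop'] with t ht
    unfold wedIntegrand
    exact EReal.add_ne_top (EReal.coe_ne_top _) ht
  · exact ((integrable_exp_iff hε _).2 hint).congr hcongr

lemma integrable_energy {X : Type*} [MetricSpace X]
    {σ : TopologicalSpace X} (hcomp : Compatible σ) {φ : X → EReal} {ustar : X}
    {A B : ℝ} (hφ : LSCC σ φ ustar A B) {ε : ℝ} (hε : 0 < ε) {x : X} {u : ℝ → X} {m : ℝ → ℝ}
    (h : Admissible ε x u m) (hfin : WEDfun φ ε u m ≠ ⊤) :
    (∀ᵐ t, 0 < t → φ (u t) ≠ ⊤) ∧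
      IntegrableOn (fun t => wt ε t * energy φ ε u m t) (Ioi 0) := by
  have hsq := aemeasurable_of_ii ((ac2LocOn_iff u m).1 h.2.1).2.2.1
  have hmeas : AEMeasurable (wedIntegrand φ ε u m) (volume.restrict (Ioi (0:ℝ))) :=
    (measurable_coe_real_ereal.comp_aemeasurable (hsq.const_mul (ε / 2))).add
      (aemeasurable_phi (le_liminf_of_LSCC hcomp hφ) h.2.1)
  obtain ⟨h1, h2⟩ := integrable_of_eIntegral_ne_top (wedIntegrand_ne_bot hφ.ne_bot ε u m)
    (aemeasurable_exp hmeas) (neg_part_lt_top hφ hε h) hfin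
  have h1' : ∀ᵐ t ∂expMeasure ε, φ (u t) ≠ ⊤ := by
    filter_upwards [h1] with t ht he
    exact ht (by rw [wedIntegrand, he, EReal.coe_add_top])
  refine ⟨(ae_restrict_iff' measurableSet_Ioi).1 ((ae_exp_iff hε _).1 h1'), ?_⟩
  rw [← integrable_exp_iff hε]
  refine h2.congr ?_
  filter_upwards [h1'] with t ht using toReal_wedIntegrand hφ.ne_bot ε m ht

/-! ### Dynamic programming along a minimizer -/

lemma veps_le {X : Type*} [MetricSpace X] (φ : X → EReal) {ε : ℝ} {x : X} {v : ℝ → X} {n : ℝ → ℝ}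
    (h : Admissible ε x v n) : Veps φ ε x ≤ WEDfun φ ε v n :=
  iInf_le (fun p : {p : (ℝ → X) × (ℝ → ℝ) // Admissible ε x p.1 p.2} => WEDfun φ ε p.1.1 p.1.2)
    ⟨(v, n), h⟩

lemma energy_ccat {X : Type*} (φ : X → EReal) (ε T : ℝ) (u v : ℝ → X) (m n : ℝ → ℝ) :
    energy φ ε (ccat T u v) (ccat T m n) = ccat T (energy φ ε u m) (energy φ ε v n) := by
  funext t
  simp only [energy, ccat]
  split_ifs <;> rfl

lemma admissible_ccat {X : Type*} [MetricSpace X] {ε : ℝ} (hε : 0 < ε) {u v : ℝ → X}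
    {m n : ℝ → ℝ} {T : ℝ} (hT : 0 ≤ T) (hu : AC2LocOn u m (Ici 0))
    (hv : Admissible ε (u T) v n) : Admissible ε (u 0) (ccat T u v) (ccat T m n) := by
  rw [admissible_iff hε] at hv ⊢
  obtain ⟨h0, h1, h2⟩ := hv
  refine ⟨ccat_of_le u v hT, ac2_ccat hu h1 hT h0, ?_⟩
  have hsq : (fun r => ccat T m n r ^ 2) = ccat T (fun r => m r ^ 2) (fun r => n r ^ 2) := by
    funext r
    simp only [ccat]
    split_ifs <;> rfl
  have := (weighted_ccat (ε := ε) hT ((ac2LocOn_iff u m).1 hu).2.2.1 h2).1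
  simpa only [← hsq] using this

lemma WEDfun_ccat {X : Type*} {φ : X → EReal} (hbot : ∀ x, φ x ≠ ⊥) {ε : ℝ} (hε : 0 < ε)
    {u v : ℝ → X} {m n : ℝ → ℝ} {T : ℝ} (hT : 0 ≤ T)
    (hu : ∀ᵐ t, 0 < t → φ (u t) ≠ ⊤)
    (hEu : ∀ b, 0 ≤ b → IntervalIntegrable (energy φ ε u m) volume 0 b)
    (hv : ∀ᵐ t, 0 < t → φ (v t) ≠ ⊤)
    (hEv : IntegrableOn (fun t => wt ε t * energy φ ε v n t) (Ioi 0)) :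
    WEDfun φ ε (ccat T u v) (ccat T m n) =
      (((∫ t in (0:ℝ)..T, wt ε t * energy φ ε u m t) +
        Real.exp (-T / ε) * ∫ t in Ioi 0, wt ε t * energy φ ε v n t : ℝ) : EReal) := by
  obtain ⟨h1, h2⟩ := weighted_ccat hT hEu hEv
  rw [WEDfun_eq hbot hε, energy_ccat, h2]
  · have hv' := (measurePreserving_sub_right (volume : Measure ℝ) T).quasiMeasurePreserving.ae hv
    filter_upwards [hu, hv'] with t ht ht₂ h0
    rcases le_or_gt t T with h | h
    · rw [ccat_of_le u v h]
      exact ht h0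
    · rw [ccat_of_lt u v h]
      exact ht₂ (sub_pos.2 h)
  · rwa [energy_ccat]

lemma admissible_restart {X : Type*} [MetricSpace X] {ε : ℝ} (hε : 0 < ε) {x : X} {u : ℝ → X}
    {m : ℝ → ℝ} (h : Admissible ε x u m) {T : ℝ} (hT : 0 ≤ T) :
    Admissible ε (u T) (fun s => u (T + s)) (fun s => m (T + s)) := by
  rw [admissible_iff hε] at h ⊢
  obtain ⟨-, h1, h2⟩ := h
  refine ⟨by rw [add_zero], by simpa using ac2_affine h1 hT one_pos, ?_⟩
  exact (weighted_shift (fun t => m t ^ 2) (h2.mono_set (Ioi_subset_Ioi hT))).1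

/-- The value `V_ε(u t)` along a curve `u` with total energy `J = I_ε[u]`, as predicted by the
dynamic programming principle. -/
def value {X : Type*} (φ : X → EReal) (ε : ℝ) (u : ℝ → X) (m : ℝ → ℝ) (t : ℝ) : ℝ :=
  Real.exp (t / ε) * ((∫ r in Ioi 0, wt ε r * energy φ ε u m r) -
    ∫ r in (0:ℝ)..t, wt ε r * energy φ ε u m r)

lemma value_eq {X : Type*} {φ : X → EReal} {ε : ℝ} {u : ℝ → X} {m : ℝ → ℝ}
    (hE : IntegrableOn (fun t => wt ε t * energy φ ε u m t) (Ioi 0)) {T : ℝ} (hT : 0 ≤ T) :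
    value φ ε u m T = ∫ t in Ioi 0, wt ε t * energy φ ε u m (T + t) := by
  have hE2 := hE.mono_set (Ioi_subset_Ioi hT)
  have hE1 := hE.mono_set (Ioc_subset_Ioi_self : Ioc 0 T ⊆ Ioi 0)
  have hs := (weighted_shift (energy φ ε u m) hE2).2
  have hU : ∫ r in Ioi 0, wt ε r * energy φ ε u m r =
      (∫ r in (0:ℝ)..T, wt ε r * energy φ ε u m r) +
        ∫ r in Ioi T, wt ε r * energy φ ε u m r := by
    rw [intervalIntegral.integral_of_le hT, ← Ioc_union_Ioi_eq_Ioi hT]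
    exact setIntegral_union (Ioc_disjoint_Ioi le_rfl) measurableSet_Ioi hE1 hE2
  rw [value, hU, add_sub_cancel_left, hs, ← mul_assoc, ← Real.exp_add]
  rw [show T / ε + -T / ε = 0 by ring, Real.exp_zero, one_mul]

lemma WEDfun_restart {X : Type*} {φ : X → EReal} (hbot : ∀ x, φ x ≠ ⊥) {ε : ℝ} (hε : 0 < ε)
    {u : ℝ → X} {m : ℝ → ℝ} (hu : ∀ᵐ t, 0 < t → φ (u t) ≠ ⊤)
    (hE : IntegrableOn (fun t => wt ε t * energy φ ε u m t) (Ioi 0)) {T : ℝ} (hT : 0 ≤ T) :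
    WEDfun φ ε (fun s => u (T + s)) (fun s => m (T + s)) = (value φ ε u m T : EReal) := by
  rw [value_eq hE hT]
  refine WEDfun_eq hbot hε (by simpa using ae_affine hu hT one_pos) ?_
  exact (weighted_shift (energy φ ε u m) (hE.mono_set (Ioi_subset_Ioi hT))).1

/-- Dynamic programming: restarting a minimizer at time `T` gives a minimizer from `u T`, since any
better continuation could be glued to `u` restricted to `[0,T]`. -/
lemma veps_curve {X : Type*} [MetricSpace X] {σ : TopologicalSpace X} (hcomp : Compatible σ)
    {φ : X → EReal} {ustar : X} {A B : ℝ} (hφ : LSCC σ φ ustar A B) {ε : ℝ} (hε : 0 < ε) {x : X}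
    {u : ℝ → X} {m : ℝ → ℝ} (hmin : IsMinimizer φ ε x u m)
    (hu : ∀ᵐ t, 0 < t → φ (u t) ≠ ⊤)
    (hE : IntegrableOn (fun t => wt ε t * energy φ ε u m t) (Ioi 0)) {T : ℝ} (hT : 0 ≤ T) :
    Veps φ ε (u T) = (value φ ε u m T : EReal) := by
  have hbot := hφ.ne_bot
  refine le_antisymm ?_ ?_
  · rw [← WEDfun_restart hbot hε hu hE hT]
    exact veps_le φ (admissible_restart hε hmin.1 hT)
  · refine le_iInf ?_
    rintro ⟨⟨v, n⟩, hv⟩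
    dsimp only at hv ⊢
    rcases eq_or_ne (WEDfun φ ε v n) ⊤ with htop | htop
    · rw [htop]
      exact le_top
    obtain ⟨hv1, hv2⟩ := integrable_energy hcomp hφ hε hv htop
    have hadm := admissible_ccat hε hT hmin.1.2.1 hv
    rw [hmin.1.1] at hadm
    have hle := hmin.2 _ _ hadm
    rw [WEDfun_ccat hbot hε hT hu (ii_of_weighted hε hE) hv1 hv2, WEDfun_eq hbot hε hu hE,
      EReal.coe_le_coe_iff] at hle
    rw [WEDfun_eq hbot hε hv1 hv2, EReal.coe_le_coe_iff, value]
    have h2 : Real.exp (T / ε) * (Real.exp (-T / ε) * ∫ t in Ioi 0, wt ε t * energy φ ε v n t) =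
        ∫ t in Ioi 0, wt ε t * energy φ ε v n t := by
      rw [← mul_assoc, ← Real.exp_add, show T / ε + -T / ε = 0 by ring, Real.exp_zero, one_mul]
    rw [← h2]
    exact mul_le_mul_of_nonneg_left (by linarith) (Real.exp_pos _).le

lemma ii_phi {X : Type*} {φ : X → EReal} {ε : ℝ} {u : ℝ → X} {m : ℝ → ℝ}
    (hsq : ∀ b, 0 ≤ b → IntervalIntegrable (fun r => m r ^ 2) volume 0 b)
    (hE : ∀ b, 0 ≤ b → IntervalIntegrable (energy φ ε u m) volume 0 b) (b : ℝ) (hb : 0 ≤ b) :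
    IntervalIntegrable (fun r => (φ (u r)).toReal) volume 0 b := by
  refine ((hE b hb).sub ((hsq b hb).const_mul (ε / 2))).congr fun r _ => ?_
  simp [energy]

/-- The energy density of the curve `s ↦ u (α s)`, read at the original time `r = α s` and weighted
so that it can be integrated in `r`. -/
def scaledEnergy {X : Type*} (φ : X → EReal) (ε α : ℝ) (u : ℝ → X) (m : ℝ → ℝ) (r : ℝ) : ℝ :=
  α⁻¹ * (wt ε (r / α) * (ε / 2 * (α * m r) ^ 2 + (φ (u r)).toReal))

/-- Starting from `u t`, running through the arc `u` on `[t, t₂]` with its parametrization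
accelerated by the factor `α` and following `u` unchanged afterwards does not beat the minimizer. -/
lemma value_le_scaled {X : Type*} [MetricSpace X] {σ : TopologicalSpace X} (hcomp : Compatible σ)
    {φ : X → EReal} {ustar : X} {A B : ℝ} (hφ : LSCC σ φ ustar A B) {ε : ℝ} (hε : 0 < ε) {x : X}
    {u : ℝ → X} {m : ℝ → ℝ} (hmin : IsMinimizer φ ε x u m)
    (hu : ∀ᵐ t, 0 < t → φ (u t) ≠ ⊤)
    (hE : IntegrableOn (fun t => wt ε t * energy φ ε u m t) (Ioi 0)) {α : ℝ} (hα : 0 < α)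
    {t t₂ : ℝ} (ht : 0 ≤ t) (htt : t ≤ t₂) :
    Real.exp (-t / (α * ε)) * value φ ε u m t ≤
      (∫ r in t..t₂, scaledEnergy φ ε α u m r) +
        Real.exp (-t₂ / (α * ε)) * value φ ε u m t₂ := by
  have hbot := hφ.ne_bot
  have ht₂ : 0 ≤ t₂ := ht.trans htt
  set T : ℝ := (t₂ - t) / α with hT_def
  have hT : 0 ≤ T := div_nonneg (sub_nonneg.2 htt) hα.le
  have hend : t + α * T = t₂ := by
    rw [hT_def]
    field_simp
    ring
  obtain ⟨-, hac, -⟩ := hmin.1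
  have hv := admissible_restart hε hmin.1 ht₂
  have hacα := ac2_affine hac ht hα
  have hadm := admissible_ccat (u := fun s => u (t + α * s)) hε hT hacα
    (by simpa only [hend] using hv)
  simp only [mul_zero, add_zero] at hadm
  have hsq := ((ac2LocOn_iff u m).1 hac).2.2.1
  have hφii := ii_phi hsq (ii_of_weighted hε hE)
  have hEα : ∀ b, 0 ≤ b → IntervalIntegrable
      (energy φ ε (fun s => u (t + α * s)) (fun s => α * m (t + α * s))) volume 0 b := by
    intro b hb
    have h1 := ((ac2LocOn_iff _ _).1 hacα).2.2.1 b hb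
    exact (h1.const_mul (ε / 2)).add (ii_affine hφii ht hα b hb)
  have hle := veps_le φ hadm
  rw [veps_curve hcomp hφ hε hmin hu hE ht, WEDfun_ccat hbot hε hT (ae_affine hu ht hα) hEα
    (by simpa using ae_affine hu ht₂ one_pos)
    (weighted_shift (energy φ ε u m) (hE.mono_set (Ioi_subset_Ioi ht₂))).1,
    EReal.coe_le_coe_iff] at hle
  have hval : ∫ s in Ioi 0, wt ε s * energy φ ε (fun s => u (t₂ + s)) (fun s => m (t₂ + s)) s =
      value φ ε u m t₂ := (value_eq hE ht₂).symm
  rw [hval] at hle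
  -- the substitution `r = t + α s`
  have hsub : Real.exp (-t / (α * ε)) * ∫ s in (0:ℝ)..T, wt ε s *
      energy φ ε (fun s => u (t + α * s)) (fun s => α * m (t + α * s)) s =
      ∫ r in t..t₂, scaledEnergy φ ε α u m r := by
    have hc := intervalIntegral.integral_comp_add_mul (a := 0) (b := T)
      (fun r => α * scaledEnergy φ ε α u m r) hα.ne' t
    rw [mul_zero, add_zero, hend, intervalIntegral.integral_const_mul (μ := volume) (a := t),
      smul_eq_mul, inv_mul_cancel_left₀ hα.ne'] at hc
    rw [← hc, ← intervalIntegral.integral_const_mul]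
    refine intervalIntegral.integral_congr fun s _ => ?_
    have hw : wt ε ((t + α * s) / α) = Real.exp (-t / (α * ε)) * wt ε s := by
      rw [show (t + α * s) / α = t / α + s by field_simp, wt_add]
      congr 2
      field_simp
    simp only [scaledEnergy, energy, hw]
    field_simp
  have hexp : Real.exp (-t / (α * ε)) * Real.exp (-T / ε) = Real.exp (-t₂ / (α * ε)) := by
    rw [← Real.exp_add, ← hend]
    congr 1
    field_simp
    ring
  have := mul_le_mul_of_nonneg_left hle (Real.exp_pos (-t / (α * ε))).le
  rwa [mul_add, hsub, ← mul_assoc, hexp] at this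

/-! ### Differentiation along a minimizer -/

lemma ae_hasDerivAt_primitive {f : ℝ → ℝ} (hf : ∀ b, 0 ≤ b → IntervalIntegrable f volume 0 b) :
    ∀ᵐ t, 0 < t → HasDerivAt (fun t => ∫ r in (0:ℝ)..t, f r) (f t) t := by
  have hloc : LocallyIntegrable ((Ioi 0).indicator f) volume := by
    intro t
    have h := ii_indicator hf (t - 1) (t + 1)
    rw [intervalIntegrable_iff_integrableOn_Icc_of_le (by linarith)] at h
    exact ⟨_, Icc_mem_nhds (by linarith) (by linarith), h⟩
  filter_upwards [LocallyIntegrable.ae_hasDerivAt_integral hloc] with t ht h0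
  have h1 := ht 0
  rw [indicator_of_mem (show t ∈ Ioi 0 from h0)] at h1
  refine h1.congr_of_eventuallyEq ?_
  filter_upwards [Ioi_mem_nhds h0] with s hs
  exact (integral_indicator_eq le_rfl (le_of_lt (mem_Ioi.1 hs))).symm

lemma hasDerivAt_value {X : Type*} {φ : X → EReal} {ε : ℝ} (hε : 0 < ε) {u : ℝ → X} {m : ℝ → ℝ}
    {t : ℝ} (h : HasDerivAt (fun t => ∫ r in (0:ℝ)..t, wt ε r * energy φ ε u m r)
      (wt ε t * energy φ ε u m t) t) :
    HasDerivAt (value φ ε u m)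
      (-(1 / 2 * m t ^ 2 + 1 / ε * ((φ (u t)).toReal - value φ ε u m t))) t := by
  have h1 : HasDerivAt (fun t : ℝ => Real.exp (t / ε)) (Real.exp (t / ε) * (1 / ε)) t :=
    ((hasDerivAt_id t).div_const ε).exp
  have h2 := h1.mul (h.const_sub (∫ r in Ioi 0, wt ε r * energy φ ε u m r))
  refine h2.congr_deriv ?_
  have h3 : Real.exp (t / ε) * (wt ε t * energy φ ε u m t) = ε⁻¹ * energy φ ε u m t := by
    rw [wt, show -t / ε = -(t / ε) by ring, Real.exp_neg]
    field_simp
  have h4 : value φ ε u m t = Real.exp (t / ε) * ((∫ r in Ioi 0, wt ε r * energy φ ε u m r) -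
    ∫ r in (0:ℝ)..t, wt ε r * energy φ ε u m r) := rfl
  rw [mul_neg, h3, mul_right_comm, ← h4, energy]
  field_simp
  ring

lemma ac_value {X : Type*} {φ : X → EReal} {ε : ℝ} {u : ℝ → X} {m : ℝ → ℝ}
    (hE : IntegrableOn (fun t => wt ε t * energy φ ε u m t) (Ioi 0)) {b : ℝ} (hb : 0 ≤ b) :
    AbsolutelyContinuousOnInterval (value φ ε u m) 0 b := by
  have h1 : IntervalIntegrable (fun t => wt ε t * energy φ ε u m t) volume 0 b :=
    (intervalIntegrable_iff_integrableOn_Ioc_of_le hb).2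
      (hE.mono_set (Ioc_subset_Ioi_self : Ioc 0 b ⊆ Ioi 0))
  have h2 : AbsolutelyContinuousOnInterval (fun t : ℝ => Real.exp (t / ε)) 0 b :=
    ContDiffOn.absolutelyContinuousOnInterval (by fun_prop)
  have h3 : AbsolutelyContinuousOnInterval
      (fun _ : ℝ => ∫ r in Ioi 0, wt ε r * energy φ ε u m r) 0 b :=
    ContDiffOn.absolutelyContinuousOnInterval (by fun_prop)
  exact h2.fun_mul (h3.fun_sub
    (h1.absolutelyContinuousOnInterval_intervalIntegral (c := 0) left_mem_uIcc))

/-- First variation under time rescaling by the factor `α`: the function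
`t ↦ ∫₀ᵗ scaledEnergy + e^{-t/(αε)} V_ε(u t)` is nondecreasing, so its derivative is nonnegative. -/
lemma ae_scaled_ineq {X : Type*} [MetricSpace X] {σ : TopologicalSpace X} (hcomp : Compatible σ)
    {φ : X → EReal} {ustar : X} {A B : ℝ} (hφ : LSCC σ φ ustar A B) {ε : ℝ} (hε : 0 < ε) {x : X}
    {u : ℝ → X} {m : ℝ → ℝ} (hmin : IsMinimizer φ ε x u m)
    (hu : ∀ᵐ t, 0 < t → φ (u t) ≠ ⊤)
    (hE : IntegrableOn (fun t => wt ε t * energy φ ε u m t) (Ioi 0)) {α : ℝ} (hα : 0 < α) :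
    ∀ᵐ t, 0 < t →
      0 ≤ (α - 1) * (α * (ε / 2 * m t ^ 2) - ((φ (u t)).toReal - value φ ε u m t)) := by
  have hsq := ((ac2LocOn_iff u m).1 hmin.1.2.1).2.2.1
  have hφii := ii_phi hsq (ii_of_weighted hε hE)
  have hS : ∀ b, 0 ≤ b → IntervalIntegrable (scaledEnergy φ ε α u m) volume 0 b := by
    intro b hb
    have h1 : IntervalIntegrable (fun r => ε / 2 * (α * m r) ^ 2 + (φ (u r)).toReal)
        volume 0 b := by
      simp only [mul_pow]
      exact (((hsq b hb).const_mul _).const_mul _).add (hφii b hb)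
    have hc : Continuous fun r => wt ε (r / α) := (continuous_wt ε).comp (by fun_prop)
    exact (h1.continuousOn_mul hc.continuousOn).const_mul _
  have hW : ∀ b, 0 ≤ b → IntervalIntegrable (fun t => wt ε t * energy φ ε u m t) volume 0 b :=
    fun b hb => (intervalIntegrable_iff_integrableOn_Ioc_of_le hb).2
      (hE.mono_set (Ioc_subset_Ioi_self : Ioc 0 b ⊆ Ioi 0))
  have hmono : MonotoneOn (fun t => (∫ r in (0:ℝ)..t, scaledEnergy φ ε α u m r) +
      Real.exp (-t / (α * ε)) * value φ ε u m t) (Ici 0) := by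
    intro s hs t ht hst
    have h1 := value_le_scaled hcomp hφ hε hmin hu hE hα hs hst
    have h2 := intervalIntegral.integral_add_adjacent_intervals (hS s hs)
      ((hS s hs).symm.trans (hS t ht))
    dsimp only
    linarith
  filter_upwards [ae_hasDerivAt_primitive hS, ae_hasDerivAt_primitive hW] with t h1 h2 ht
  have h3 : HasDerivAt (fun t : ℝ => Real.exp (-t / (α * ε)))
      (Real.exp (-t / (α * ε)) * (-1 / (α * ε))) t :=
    ((hasDerivAt_id t).neg.div_const (α * ε)).exp
  have h4 := (h1 ht).add (h3.mul (hasDerivAt_value hε (h2 ht)))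
  have h5 := hmono.derivWithin_nonneg (x := t)
  have h6 := h4.hasDerivWithinAt (s := Ici 0)
  have h7 := h6.derivWithin ((uniqueDiffOn_Ici (0:ℝ)) t (mem_Ici.2 ht.le))
  have h8 := h5.trans_eq h7
  have h9 : scaledEnergy φ ε α u m t + (Real.exp (-t / (α * ε)) * (-1 / (α * ε)) *
      value φ ε u m t + Real.exp (-t / (α * ε)) *
        -(1 / 2 * m t ^ 2 + 1 / ε * ((φ (u t)).toReal - value φ ε u m t))) =
      Real.exp (-t / (α * ε)) / (α * ε) *
        ((α - 1) * (α * (ε / 2 * m t ^ 2) - ((φ (u t)).toReal - value φ ε u m t))) := by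
    rw [scaledEnergy, wt, show -(t / α) / ε = -t / (α * ε) by field_simp]
    field_simp
    ring
  rw [h9] at h8
  exact nonneg_of_mul_nonneg_right h8 (by positivity)

/-- Letting `α → 1` from above and from below in `ae_scaled_ineq`. -/
lemma ae_value_eq {X : Type*} [MetricSpace X] {σ : TopologicalSpace X} (hcomp : Compatible σ)
    {φ : X → EReal} {ustar : X} {A B : ℝ} (hφ : LSCC σ φ ustar A B) {ε : ℝ} (hε : 0 < ε) {x : X}
    {u : ℝ → X} {m : ℝ → ℝ} (hmin : IsMinimizer φ ε x u m)
    (hu : ∀ᵐ t, 0 < t → φ (u t) ≠ ⊤)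
    (hE : IntegrableOn (fun t => wt ε t * energy φ ε u m t) (Ioi 0)) :
    ∀ᵐ t, 0 < t → value φ ε u m t = (φ (u t)).toReal - ε / 2 * m t ^ 2 := by
  have hδ : ∀ n : ℕ, (0:ℝ) < 1 / ((n:ℝ) + 2) ∧ 1 / ((n:ℝ) + 2) < 1 := by
    intro n
    have : (0:ℝ) ≤ n := Nat.cast_nonneg n
    refine ⟨by positivity, ?_⟩
    rw [div_lt_one (by positivity)]
    linarith
  have hlim : Tendsto (fun n : ℕ => 1 / ((n:ℝ) + 2)) atTop (𝓝 0) := by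
    have := tendsto_one_div_add_atTop_nhds_zero_nat (𝕜 := ℝ)
    refine (this.comp (tendsto_add_atTop_nat 1)).congr fun n => ?_
    simp only [Function.comp, Nat.cast_add, Nat.cast_one]
    ring_nf
  have hup : ∀ n : ℕ, _ := fun n => ae_scaled_ineq hcomp hφ hε hmin hu hE
    (α := 1 + 1 / ((n:ℝ) + 2)) (by linarith [(hδ n).1])
  have hdn : ∀ n : ℕ, _ := fun n => ae_scaled_ineq hcomp hφ hε hmin hu hE
    (α := 1 - 1 / ((n:ℝ) + 2)) (by linarith [(hδ n).2])
  filter_upwards [ae_all_iff.2 hup, ae_all_iff.2 hdn] with t h1 h2 ht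
  have e1 : (φ (u t)).toReal - value φ ε u m t ≤ ε / 2 * m t ^ 2 := by
    have hl : Tendsto (fun n : ℕ => (1 + 1 / ((n:ℝ) + 2)) * (ε / 2 * m t ^ 2)) atTop
        (𝓝 (ε / 2 * m t ^ 2)) := by
      simpa using (hlim.const_add 1).mul_const (ε / 2 * m t ^ 2)
    refine ge_of_tendsto' hl fun n => ?_
    have := h1 n ht
    rw [add_sub_cancel_left] at this
    exact sub_nonneg.1 (nonneg_of_mul_nonneg_right this (hδ n).1)
  have e2 : ε / 2 * m t ^ 2 ≤ (φ (u t)).toReal - value φ ε u m t := by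
    have hl : Tendsto (fun n : ℕ => (1 - 1 / ((n:ℝ) + 2)) * (ε / 2 * m t ^ 2)) atTop
        (𝓝 (ε / 2 * m t ^ 2)) := by
      simpa using (hlim.const_sub 1).mul_const (ε / 2 * m t ^ 2)
    refine le_of_tendsto' hl fun n => ?_
    have := h2 n ht
    rw [sub_sub_cancel_left, neg_mul, ← mul_neg] at this
    have := nonneg_of_mul_nonneg_right this (hδ n).1
    linarith
  linarith

lemma geps_sq {X : Type*} [MetricSpace X] {φ : X → EReal} {ε : ℝ} (hε : 0 < ε) {x : X}
    (hbot : φ x ≠ ⊥) (htop : φ x ≠ ⊤) {w : ℝ} (hV : Veps φ ε x = w) :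
    Geps φ ε x ^ 2 = ENNReal.ofReal (2 / ε * ((φ x).toReal - w)) := by
  lift φ x to ℝ using ⟨htop, hbot⟩ with y hy
  rw [Geps, hV, if_neg (EReal.coe_ne_top w), ← ENNReal.rpow_natCast, ← ENNReal.rpow_mul, ← hy,
    ← EReal.coe_sub, epos_of_ne_top (EReal.coe_ne_top _), EReal.toReal_coe, EReal.toReal_coe]
  norm_num
  rw [ENNReal.ofReal_mul (by positivity), ENNReal.ofReal_div_of_pos hε, ENNReal.ofReal_ofNat,
    ENNReal.mul_div_right_comm]

/-- Proposition 4.3, fundamental identity: for `x ∈ D(V_ε)` and any WED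
minimizer `u_ε` from `x`, the map `t ↦ V_ε(u_ε(t))` is (locally) absolutely continuous on
`[0,∞)` and for a.e. `t > 0`,
`-(V_ε∘u_ε)'(t) = (1/2)|u_ε'|²(t) + (1/ε)(φ(u_ε(t)) - V_ε(u_ε(t))) = (1/2)|u_ε'|² + (1/2)G_ε²(u_ε(t))`,
together with `V_ε(u_ε(t)) = φ(u_ε(t)) - (ε/2)|u_ε'|²(t)` a.e. -/
theorem statement11
    {X : Type*} [MetricSpace X] [CompleteSpace X]
    (σ : TopologicalSpace X) (hcomp : Compatible σ)
    (φ : X → EReal) (ustar : X) (A B : ℝ) (hφ : LSCC σ φ ustar A B)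
    (ε : ℝ) (hε : 0 < ε) (hεB : B ≤ 1 / (16 * ε))
    (x : X) (hx : Veps φ ε x ≠ ⊤)
    (u : ℝ → X) (m : ℝ → ℝ) (hmin : IsMinimizer φ ε x u m) :
    ∃ g : ℝ → ℝ,
      (∀ t : ℝ, 0 ≤ t → Veps φ ε (u t) ≠ ⊤ ∧ Veps φ ε (u t) ≠ ⊥) ∧
      RealACLoc (fun t => (Veps φ ε (u t)).toReal) g ∧
      ∀ᵐ t ∂(volume.restrict (Ioi (0:ℝ))),
        φ (u t) ≠ ⊤ ∧
        -(g t) = 1 / 2 * m t ^ 2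
          + (1 / ε) * ((φ (u t)).toReal - (Veps φ ε (u t)).toReal) ∧
        (Geps φ ε (u t)) ^ 2 =
          ENNReal.ofReal (2 / ε * ((φ (u t)).toReal - (Veps φ ε (u t)).toReal)) ∧
        Veps φ ε (u t) = φ (u t) - ((ε / 2 * m t ^ 2 : ℝ) : EReal) := by
  have hfin : WEDfun φ ε u m ≠ ⊤ := by
    intro htop
    refine hx (iInf_eq_top.2 fun p => top_le_iff.1 ?_)
    rw [← htop]
    exact hmin.2 _ _ p.2
  obtain ⟨hu, hE⟩ := integrable_energy hcomp hφ hε hmin.1 hfin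
  have hV : ∀ t, 0 ≤ t → Veps φ ε (u t) = (value φ ε u m t : EReal) :=
    fun t ht => veps_curve hcomp hφ hε hmin hu hE ht
  have hVr : ∀ t, 0 ≤ t → (Veps φ ε (u t)).toReal = value φ ε u m t := by
    intro t ht
    rw [hV t ht, EReal.toReal_coe]
  have hsq := ((ac2LocOn_iff u m).1 hmin.1.2.1).2.2.1
  have hφii := ii_phi hsq (ii_of_weighted hε hE)
  have hW : ∀ b, 0 ≤ b → IntervalIntegrable (fun t => wt ε t * energy φ ε u m t) volume 0 b :=
    fun b hb => (intervalIntegrable_iff_integrableOn_Ioc_of_le hb).2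
      (hE.mono_set (Ioc_subset_Ioi_self : Ioc 0 b ⊆ Ioi 0))
  refine ⟨fun t => -(1 / 2 * m t ^ 2 + 1 / ε * ((φ (u t)).toReal - value φ ε u m t)), ?_,
    ⟨?_, ?_⟩, ?_⟩
  · intro t ht
    rw [hV t ht]
    exact ⟨EReal.coe_ne_top _, EReal.coe_ne_bot _⟩
  · intro b hb
    rw [← intervalIntegrable_iff_integrableOn_Icc_of_le hb]
    exact (((hsq b hb).const_mul _).add (((hφii b hb).sub
      (ac_value hE hb).continuousOn.intervalIntegrable).const_mul _)).neg
  · intro t ht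
    dsimp only
    rw [hVr t ht, hVr 0 le_rfl, ← sub_eq_iff_eq_add', ← (ac_value hE ht).integral_deriv_eq_sub,
      integral_Icc_eq_integral_Ioc, ← intervalIntegral.integral_of_le ht]
    refine intervalIntegral.integral_congr_ae ?_
    filter_upwards [ae_hasDerivAt_primitive hW] with r hr hr0
    rw [uIoc_of_le ht] at hr0
    exact (hasDerivAt_value hε (hr hr0.1)).deriv
  · rw [ae_restrict_iff' measurableSet_Ioi]
    filter_upwards [hu, ae_value_eq hcomp hφ hε hmin hu hE] with t h1 h2 ht
    have ht0 : 0 ≤ t := le_of_lt (mem_Ioi.1 ht)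
    refine ⟨h1 ht, ?_, ?_, ?_⟩
    · rw [hVr t ht0, neg_neg]
    · rw [hVr t ht0]
      exact geps_sq hε (hφ.ne_bot _) (h1 ht) (hV t ht0)
    · rw [hV t ht0, h2 ht, EReal.coe_sub, EReal.coe_toReal (h1 ht) (hφ.ne_bot _)]

end WED
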